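/- arXiv:math/0112317 — 10 statements merged into one kernel-verified Lean document; each statement's English description precedes it below -/
import Mathlib

section
/- Let H be a nonzero complex Hilbert space and let A, B be bounded linear operators on H satisfying A*A − q·AA* = (1−q)·I, B*B − p·BB* = (1−p)·I, AB = BA, A*B = BA*, and (I−AA*)(I−BB*) = 0. Assume the pair is topologically irreducible: the only closed subspaces of H invariant under all four operators A, A*, B, B* are {0} and H. Then one of the following holds, where (e_k)_{k≥0} is the standard orthonormal basis of ℓ²(ℕ): (i) there exist θ ∈ [0,2π) and a unitary U : H → ℓ²(ℕ) such that U A U⁻¹ = e^{iθ}·I and (U B U⁻¹) e_k = √(1−p^{k+1}) e_{k+1} for all k ≥ 0; (ii) there exist θ ∈ [0,2π) and a unitary U : H → ℓ²(ℕ) such that (U A U⁻¹) e_k = √(1−q^{k+1}) e_{k+1} for all k ≥ 0 and U B U⁻¹ = e^{iθ}·I; (iii) H is one-dimensional and there exist θ₁, θ₂ ∈ [0,2π) such that A = e^{iθ₁}·I and B = e^{iθ₂}·I. -/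
open ContinuousLinearMap

/-- The standard orthonormal basis vectors of `ℓ²(ℕ)`. -/
noncomputable def stdBasis (k : ℕ) : lp (fun _ : ℕ => ℂ) 2 := lp.single 2 k (1 : ℂ)

/-! By Schur's lemma, a unitary solution of `b*b - p bb* = 1 - p` commuting with an irreducible
family is a phase. If `bb* ≠ 1`, then `b` is not invertible: otherwise `1 - b*b` and `1 - bb*` would
be similar, hence of equal norm, while the relation makes the first `p` times the second. As `b` is
bounded below, `b*` then kills some nonzero `v`, the vacuum, and the normalized orbit of `v` under
`b` is orthonormal and carries a weighted shift.

If `AA* ≠ 1`, the orbits under `A` of all vacuum vectors of `A` span a dense subspace. On `ker A*`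
the operator `1 - BB*` agrees with `(1 - BB*)(1 - AA*) = 0`, and it commutes with `A`, so it is 0.
Hence at most one of `A` and `B` fails to be unitary, and the other one is a phase. -/

section TopologicalIrreducibility

variable {𝕜 E : Type*} [NontriviallyNormedField 𝕜] [NormedAddCommGroup E] [NormedSpace 𝕜 E]
  {S S' : Set (E →L[𝕜] E)}

/-- A set of bounded operators is topologically irreducible if its only closed invariant subspaces
are the trivial ones. The zero space is not excluded, so `E` is assumed nontrivial where needed. -/
def IsTopologicallyIrreducible (S : Set (E →L[𝕜] E)) : Prop :=
  ∀ K : Submodule 𝕜 E, IsClosed (K : Set E) → (∀ T ∈ S, ∀ x ∈ K, T x ∈ K) → K = ⊥ ∨ K = ⊤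

namespace IsTopologicallyIrreducible

theorem of_forall_mem_or_scalar (hS : IsTopologicallyIrreducible S)
    (h : ∀ T ∈ S, T ∈ S' ∨ ∃ c : 𝕜, T = c • 1) : IsTopologicallyIrreducible S' := by
  refine fun K hK hinv ↦ hS K hK fun T hT x hx ↦ ?_
  obtain hT' | ⟨c, rfl⟩ := h T hT
  · exact hinv T hT' x hx
  · exact K.smul_mem c hx

theorem eq_zero_or_ker_eq_bot (hS : IsTopologicallyIrreducible S) {T : E →L[𝕜] E}
    (hT : ∀ R ∈ S, Commute R T) : T = 0 ∨ T.ker = ⊥ := by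
  refine (hS T.ker T.isClosed_ker fun R hR x hx ↦ ?_).symm.imp_left fun h ↦ ?_
  · have hTx : T x = 0 := hx
    change T (R x) = 0
    rw [← mul_apply_eq_comp, ← (hT R hR).eq, mul_apply_eq_comp, hTx, map_zero]
  · ext x
    exact (h ▸ Submodule.mem_top : x ∈ T.ker)

theorem topologicalClosure_span_eq_top (hS : IsTopologicallyIrreducible S) {s : Set E}
    (hinv : ∀ T ∈ S, ∀ x ∈ s, T x ∈ Submodule.span 𝕜 s) {v : E} (hv : v ∈ s) (hv0 : v ≠ 0) :
    (Submodule.span 𝕜 s).topologicalClosure = ⊤ := by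
  refine (hS _ (Submodule.isClosed_topologicalClosure _) fun T hT ↦ ?_).resolve_left fun h ↦ ?_
  · exact Submodule.topologicalClosure_mem_invtSubmodule (f := T)
      (Submodule.span_le.mpr (hinv T hT))
  · exact hv0 ((Submodule.mem_bot 𝕜).mp
      (h ▸ Submodule.le_topologicalClosure _ (Submodule.subset_span hv)))

theorem finrank_eq_one_of_forall_eq_smul_one [CompleteSpace 𝕜] [Nontrivial E]
    (hS : IsTopologicallyIrreducible S) (h : ∀ T ∈ S, ∃ c : 𝕜, T = c • 1) :
    Module.finrank 𝕜 E = 1 := by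
  obtain ⟨v, hv⟩ := exists_ne (0 : E)
  have hinv (T) (hT : T ∈ S) (x) (hx : x ∈ Submodule.span 𝕜 {v}) : T x ∈ Submodule.span 𝕜 {v} := by
    obtain ⟨c, rfl⟩ := h T hT
    exact Submodule.smul_mem _ c hx
  have hspan : Submodule.span 𝕜 {v} = ⊤ :=
    (hS _ (Submodule.closed_of_finiteDimensional _) hinv).resolve_left
      (mt Submodule.span_singleton_eq_bot.mp hv)
  rw [← finrank_top, ← hspan, finrank_span_singleton hv]

end IsTopologicallyIrreducible

end TopologicalIrreducibility

section Schur

theorem exists_cfc_mul_cfc_eq_zero {R : Type*} [CStarAlgebra R] [Nontrivial R] (a : R)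
    [ha : IsStarNormal a] (h : ∀ c : ℂ, a ≠ c • 1) :
    ∃ f g : ℂ → ℂ, cfc f a ≠ 0 ∧ cfc g a ≠ 0 ∧ cfc f a * cfc g a = 0 := by
  obtain ⟨z, hz⟩ := spectrum.nonempty a
  obtain ⟨w, hw, hwz⟩ : ∃ w ∈ spectrum ℂ a, w ≠ z := by
    by_contra! hsub
    refine h z ?_
    rw [← Algebra.algebraMap_eq_smul_one]
    exact CFC.eq_algebraMap_of_spectrum_subset_singleton a z hsub
  -- `f z w` is supported on the half-plane of points closer to `w` than to `z`.
  let f (z w : ℂ) : ℂ → ℂ := fun x ↦ ((max 0 (‖x - z‖ - ‖x - w‖) : ℝ) : ℂ)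
  have hf (z w : ℂ) : Continuous (f z w) := by fun_prop
  have hne {z w : ℂ} (hw : w ∈ spectrum ℂ a) (hwz : w ≠ z) : cfc (f z w) a ≠ 0 := by
    intro h0
    have hfw : f z w w = 0 := eqOn_of_cfc_eq_cfc (h0.trans (cfc_zero ℂ a).symm)
      (hf z w).continuousOn continuousOn_const ha hw
    have hle : ‖w - z‖ ≤ 0 := by simpa [f] using hfw
    exact hwz (sub_eq_zero.mp (norm_le_zero_iff.mp hle))
  refine ⟨f z w, f w z, hne hw hwz, hne hz hwz.symm, ?_⟩
  rw [← cfc_mul (f z w) (f w z) a (hf z w).continuousOn (hf w z).continuousOn]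
  have hprod : (fun x ↦ f z w x * f w z x) = 0 := by
    ext x
    rcases le_total ‖x - z‖ ‖x - w‖ with hx | hx <;> simp [f, hx]
  rw [hprod, cfc_zero]

variable {H : Type*} [NormedAddCommGroup H] [InnerProductSpace ℂ H] [CompleteSpace H]
  [Nontrivial H] {S : Set (H →L[ℂ] H)} {T : H →L[ℂ] H}

theorem IsTopologicallyIrreducible.exists_eq_smul_one (hS : IsTopologicallyIrreducible S)
    [hT : IsStarNormal T] (hcomm : ∀ R ∈ S, Commute T R) : ∃ c : ℂ, T = c • 1 := by
  by_contra! hscalar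
  obtain ⟨f, g, hf, hg, hfg⟩ := exists_cfc_mul_cfc_eq_zero T hscalar
  have hker : (cfc f T).ker = ⊥ := (hS.eq_zero_or_ker_eq_bot fun R hR ↦
    ((hcomm R hR).cfc (hT.commute_star_left (hcomm R hR)) f).symm).resolve_left hf
  refine hg (ContinuousLinearMap.ext fun x ↦ ?_)
  have hx : cfc g T x ∈ (cfc f T).ker := congr($hfg x)
  rwa [hker, Submodule.mem_bot] at hx

theorem exists_mem_Ico_exp_mul_I_eq {c : ℂ} (hc : ‖c‖ = 1) :
    ∃ θ ∈ Set.Ico (0 : ℝ) (2 * Real.pi), Complex.exp (θ * Complex.I) = c := by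
  obtain ⟨φ, rfl⟩ := (Complex.norm_eq_one_iff c).mp hc
  have hper : Function.Periodic (fun t : ℝ ↦ Complex.exp (t * Complex.I)) (2 * Real.pi) :=
    fun t ↦ by simpa using Complex.exp_mul_I_periodic t
  obtain ⟨θ, hθ, h⟩ := hper.exists_mem_Ico₀ Real.two_pi_pos φ
  exact ⟨θ, hθ, h.symm⟩

theorem IsTopologicallyIrreducible.exists_eq_exp_smul_one (hS : IsTopologicallyIrreducible S)
    (hT : T ∈ unitary (H →L[ℂ] H)) (hcomm : ∀ R ∈ S, Commute T R) :
    ∃ θ ∈ Set.Ico (0 : ℝ) (2 * Real.pi), T = Complex.exp (θ * Complex.I) • 1 := by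
  have : IsStarNormal T := isStarNormal_of_mem_unitary hT
  obtain ⟨c, rfl⟩ := hS.exists_eq_smul_one hcomm
  have hc : ‖c‖ = 1 := by
    simpa [norm_smul] using CStarRing.norm_of_mem_unitary hT
  obtain ⟨θ, hθ, rfl⟩ := exists_mem_Ico_exp_mul_I_eq hc
  exact ⟨θ, hθ, rfl⟩

end Schur

/-- The relation `b*b - p bb* = 1 - p` defining the quantum disc (or `p`-oscillator). The
parameter is real and acts through `ℂ`. -/
def QuantumDiscRel {R : Type*} [Ring R] [Star R] [Module ℂ R] (p : ℝ) (b : R) : Prop :=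
  star b * b - (p : ℂ) • (b * star b) = ((1 - p : ℝ) : ℂ) • (1 : R)

namespace QuantumDiscRel

section Algebra

variable {R : Type*} [Ring R] [StarRing R] [Algebra ℂ R] {p : ℝ} {b : R}

theorem star_mul_self (hb : QuantumDiscRel p b) :
    star b * b = (1 - (p : ℂ)) • 1 + (p : ℂ) • (b * star b) := by
  simpa using sub_eq_iff_eq_add.mp hb

theorem one_sub_star_mul_self (hb : QuantumDiscRel p b) :
    1 - star b * b = (p : ℂ) • (1 - b * star b) := by
  rw [hb.star_mul_self]
  module

theorem mem_unitary (hb : QuantumDiscRel p b) (h : b * star b = 1) : b ∈ unitary R := by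
  refine Unitary.mem_iff.mpr ⟨?_, h⟩
  rw [hb.star_mul_self, h]
  module

theorem star_mul_pow_succ (hb : QuantumDiscRel p b) (n : ℕ) :
    star b * b ^ (n + 1) =
      (1 - (p : ℂ) ^ (n + 1)) • b ^ n + (p : ℂ) ^ (n + 1) • (b ^ (n + 1) * star b) := by
  induction n with
  | zero => simpa using hb.star_mul_self
  | succ n ih =>
    rw [pow_succ b (n + 1), ← mul_assoc, ih, add_mul, smul_mul_assoc, smul_mul_assoc,
      mul_assoc _ (star b) b, hb.star_mul_self, mul_add, mul_smul_comm, mul_smul_comm, mul_one,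
      ← mul_assoc, ← pow_succ, pow_succ (p : ℂ) (n + 1)]
    module

end Algebra

theorem mul_star_self_eq_one_of_isUnit {R : Type*} [CStarAlgebra R] {p : ℝ} {b : R}
    (hb : QuantumDiscRel p b) (hp : |p| ≠ 1) (hu : IsUnit b) : b * star b = 1 := by
  obtain ⟨u, rfl⟩ := hu
  have hconj : (u * (1 - star (u : R) * u) * ↑u⁻¹ : R) = 1 - u * star (u : R) := by
    simp [mul_sub, sub_mul, mul_assoc]
  have hnorm : ‖1 - star (u : R) * u‖ = ‖1 - u * star (u : R)‖ := by
    have hsa : IsSelfAdjoint (1 - star (u : R) * u) :=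
      (IsSelfAdjoint.one R).sub (.star_mul_self _)
    have hsa' : IsSelfAdjoint (1 - u * star (u : R)) :=
      (IsSelfAdjoint.one R).sub (.mul_star_self _)
    rw [← hsa.toReal_spectralRadius_complex_eq_norm, ← hsa'.toReal_spectralRadius_complex_eq_norm,
      ← hconj, spectralRadius, spectralRadius, spectrum.units_conjugate]
  rw [hb.one_sub_star_mul_self, norm_smul, Complex.norm_real, Real.norm_eq_abs] at hnorm
  have hzero : ‖1 - u * star (u : R)‖ = 0 := by
    by_contra h0
    exact hp ((mul_eq_right₀ h0).mp hnorm)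
  exact (sub_eq_zero.mp (norm_eq_zero.mp hzero)).symm

section Hilbert

variable {H : Type*} [NormedAddCommGroup H] [InnerProductSpace ℂ H] [CompleteSpace H]
  {p : ℝ} {B : H →L[ℂ] H}

theorem norm_sq_apply (hB : QuantumDiscRel p B) (x : H) :
    ‖B x‖ ^ 2 = (1 - p) * ‖x‖ ^ 2 + p * ‖adjoint B x‖ ^ 2 := by
  have h : adjoint B (B x) = (1 - (p : ℂ)) • x + (p : ℂ) • B (adjoint B x) :=
    congr($hB.star_mul_self x)
  calc ‖B x‖ ^ 2 = RCLike.re (inner ℂ x (adjoint B (B x))) := by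
        rw [adjoint_inner_right, inner_self_eq_norm_sq]
    _ = (1 - p) * RCLike.re (inner ℂ x x) + p * RCLike.re (inner ℂ x (B (adjoint B x))) := by
        rw [h, inner_add_right, inner_smul_right, inner_smul_right]
        simp
    _ = (1 - p) * ‖x‖ ^ 2 + p * ‖adjoint B x‖ ^ 2 := by
        rw [← adjoint_inner_left, inner_self_eq_norm_sq, inner_self_eq_norm_sq]

theorem norm_sq_le_norm_sq_apply (hB : QuantumDiscRel p B) (hp : |p| ≤ 1) (x : H) :
    (1 - |p|) * ‖x‖ ^ 2 ≤ ‖B x‖ ^ 2 := by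
  have hBx := hB.norm_sq_apply x
  rcases le_total 0 p with hp0 | hp0
  · rw [abs_of_nonneg hp0, hBx]
    exact le_add_of_nonneg_right (by positivity)
  · rw [abs_of_nonpos hp0] at hp ⊢
    have hnormB : ‖B‖ ≤ √(1 - p) := by
      refine B.opNorm_le_bound (Real.sqrt_nonneg _) fun y ↦ ?_
      rw [← Real.sqrt_sq (norm_nonneg y), ← Real.sqrt_mul (by linarith)]
      refine Real.le_sqrt_of_sq_le ?_
      nlinarith [hB.norm_sq_apply y, sq_nonneg ‖adjoint B y‖]
    have hadj : ‖adjoint B x‖ ^ 2 ≤ (1 - p) * ‖x‖ ^ 2 := by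
      calc ‖adjoint B x‖ ^ 2 ≤ (√(1 - p) * ‖x‖) ^ 2 := by
            gcongr
            exact (adjoint B).le_of_opNorm_le ((adjoint.norm_map B).trans_le hnormB) x
        _ = (1 - p) * ‖x‖ ^ 2 := by rw [mul_pow, Real.sq_sqrt (by linarith)]
    calc (1 - -p) * ‖x‖ ^ 2 ≤ (1 - p) * ‖x‖ ^ 2 + p * ((1 - p) * ‖x‖ ^ 2) := by
          nlinarith [mul_nonneg (mul_nonneg (neg_nonneg.mpr hp0) (by linarith : 0 ≤ 1 + p))
            (sq_nonneg ‖x‖)]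
      _ ≤ (1 - p) * ‖x‖ ^ 2 + p * ‖adjoint B x‖ ^ 2 :=
          add_le_add_right (mul_le_mul_of_nonpos_left hadj hp0) _
      _ = ‖B x‖ ^ 2 := hBx.symm

theorem exists_adjoint_apply_eq_zero (hB : QuantumDiscRel p B) (hp : |p| < 1)
    (hne : B * adjoint B ≠ 1) : ∃ v ≠ 0, adjoint B v = 0 := by
  suffices h : (adjoint B).ker ≠ ⊥ by
    obtain ⟨v, hv, hv0⟩ := Submodule.exists_mem_ne_zero_of_ne_bot h
    exact ⟨v, hv0, hv⟩
  intro hker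
  refine hne (hB.mul_star_self_eq_one_of_isUnit hp.ne ?_)
  have hdense : B.range.topologicalClosure = ⊤ := by
    rw [Submodule.topologicalClosure_eq_top_iff, orthogonal_range, hker]
  have hanti : AntilipschitzWith (√(1 - |p|)).toNNReal⁻¹ B := by
    refine B.antilipschitz_of_bound fun x ↦ ?_
    have hpos : 0 < √(1 - |p|) := Real.sqrt_pos.mpr (sub_pos.mpr hp)
    rw [NNReal.coe_inv, Real.coe_toNNReal _ hpos.le, le_inv_mul_iff₀ hpos]
    refine le_of_sq_le_sq ?_ (norm_nonneg _)
    rw [mul_pow, Real.sq_sqrt (sub_pos.mpr hp).le]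
    exact hB.norm_sq_le_norm_sq_apply hp.le x
  exact isUnit_iff_bijective.mpr
    ((bijective_iff_dense_range_and_antilipschitz B).mpr ⟨hdense, _, hanti⟩)

variable {v : H}

theorem adjoint_pow_succ_apply (hB : QuantumDiscRel p B) (hv : adjoint B v = 0) (n : ℕ) :
    adjoint B ((B ^ (n + 1)) v) = (1 - (p : ℂ) ^ (n + 1)) • (B ^ n) v := by
  have h : adjoint B ((B ^ (n + 1)) v) =
      (1 - (p : ℂ) ^ (n + 1)) • (B ^ n) v + (p : ℂ) ^ (n + 1) • (B ^ (n + 1)) (adjoint B v) :=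
    congr($(hB.star_mul_pow_succ n) v)
  rw [h, hv, map_zero, smul_zero, add_zero]

theorem inner_pow_succ_apply (hB : QuantumDiscRel p B) (hv : adjoint B v = 0) (m n : ℕ) :
    inner ℂ ((B ^ (m + 1)) v) ((B ^ (n + 1)) v) =
      (1 - (p : ℂ) ^ (n + 1)) * inner ℂ ((B ^ m) v) ((B ^ n) v) := by
  rw [pow_succ' B m, mul_apply_eq_comp, ← adjoint_inner_right, hB.adjoint_pow_succ_apply hv,
    inner_smul_right]

theorem inner_pow_apply_eq_zero (hB : QuantumDiscRel p B) (hv : adjoint B v = 0) {m n : ℕ}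
    (hmn : m ≠ n) : inner ℂ ((B ^ m) v) ((B ^ n) v) = 0 := by
  induction m generalizing n with
  | zero =>
    obtain ⟨k, rfl⟩ := Nat.exists_eq_succ_of_ne_zero hmn.symm
    rw [pow_succ', mul_apply_eq_comp, ← adjoint_inner_left, pow_zero, one_apply_eq_self, hv,
      inner_zero_left]
  | succ m ih =>
    cases n with
    | zero =>
      rw [pow_succ', mul_apply_eq_comp, ← adjoint_inner_right, pow_zero, one_apply_eq_self,
        hv, inner_zero_right]
    | succ n => rw [hB.inner_pow_succ_apply hv, ih (by simpa using hmn), mul_zero]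

theorem norm_pow_succ_apply (hB : QuantumDiscRel p B) (hv : adjoint B v = 0) (n : ℕ) :
    ‖(B ^ (n + 1)) v‖ = √(1 - p ^ (n + 1)) * ‖(B ^ n) v‖ := by
  have hsq : ‖(B ^ (n + 1)) v‖ ^ 2 = (1 - p ^ (n + 1)) * ‖(B ^ n) v‖ ^ 2 := by
    have h := hB.inner_pow_succ_apply hv n n
    simp only [inner_self_eq_norm_sq_to_K, Complex.coe_algebraMap] at h
    exact_mod_cast h
  rw [← Real.sqrt_sq (norm_nonneg ((B ^ (n + 1)) v)), hsq, Real.sqrt_mul' _ (sq_nonneg _),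
    Real.sqrt_sq (norm_nonneg _)]

theorem pow_apply_ne_zero (hB : QuantumDiscRel p B) (hp : |p| < 1) (hv : adjoint B v = 0)
    (hv0 : v ≠ 0) (n : ℕ) : (B ^ n) v ≠ 0 := by
  induction n with
  | zero => exact hv0
  | succ n ih =>
    have hlt : p ^ (n + 1) < 1 := (le_abs_self _).trans_lt <| by
      rw [abs_pow]
      exact pow_lt_one₀ (abs_nonneg p) hp n.succ_ne_zero
    rw [← norm_ne_zero_iff, hB.norm_pow_succ_apply hv]
    exact mul_ne_zero (Real.sqrt_pos.mpr (sub_pos.mpr hlt)).ne' (norm_ne_zero_iff.mpr ih)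

end Hilbert

end QuantumDiscRel

section Shift

variable {H : Type*} [NormedAddCommGroup H] [InnerProductSpace ℂ H] [CompleteSpace H]
  {p : ℝ} {B : H →L[ℂ] H} {v : H}

/-- The normalized orbit of `v` under `B`, which is the orthonormal basis of the Fock
representation when `v` is a vacuum vector, i.e. `B* v = 0`. -/
noncomputable def normalizedOrbit (B : H →L[ℂ] H) (v : H) (n : ℕ) : H :=
  ((‖(B ^ n) v‖⁻¹ : ℝ) : ℂ) • (B ^ n) v

namespace QuantumDiscRel

theorem orthonormal_normalizedOrbit (hB : QuantumDiscRel p B) (hp : |p| < 1)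
    (hv : adjoint B v = 0) (hv0 : v ≠ 0) : Orthonormal ℂ (normalizedOrbit B v) := by
  refine ⟨fun n ↦ ?_, fun m n hmn ↦ ?_⟩
  · have hn : ‖(B ^ n) v‖ ≠ 0 := norm_ne_zero_iff.mpr (hB.pow_apply_ne_zero hp hv hv0 n)
    rw [normalizedOrbit, norm_smul, Complex.norm_real, norm_inv, norm_norm, inv_mul_cancel₀ hn]
  · simp only [normalizedOrbit]
    rw [inner_smul_left, inner_smul_right, hB.inner_pow_apply_eq_zero hv hmn, mul_zero, mul_zero]

theorem apply_normalizedOrbit (hB : QuantumDiscRel p B) (hp : |p| < 1) (hv : adjoint B v = 0)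
    (hv0 : v ≠ 0) (n : ℕ) :
    B (normalizedOrbit B v n) =
      ((√(1 - p ^ (n + 1)) : ℝ) : ℂ) • normalizedOrbit B v (n + 1) := by
  have hn : ‖(B ^ (n + 1)) v‖ ≠ 0 := norm_ne_zero_iff.mpr (hB.pow_apply_ne_zero hp hv hv0 _)
  simp only [normalizedOrbit]
  rw [map_smul, smul_smul, ← mul_apply_eq_comp, ← pow_succ', ← Complex.ofReal_mul]
  congr 2
  rw [hB.norm_pow_succ_apply hv] at hn ⊢
  have := left_ne_zero_of_mul hn
  have := right_ne_zero_of_mul hn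
  field_simp

theorem adjoint_normalizedOrbit_mem_span (hB : QuantumDiscRel p B) (hp : |p| < 1)
    (hv : adjoint B v = 0) (hv0 : v ≠ 0) (n : ℕ) :
    adjoint B (normalizedOrbit B v n) ∈ Submodule.span ℂ (Set.range (normalizedOrbit B v)) := by
  rw [normalizedOrbit, map_smul]
  refine Submodule.smul_mem _ _ ?_
  cases n with
  | zero => simp [hv]
  | succ n =>
    have hn : ((‖(B ^ n) v‖ : ℝ) : ℂ) ≠ 0 :=
      Complex.ofReal_ne_zero.mpr (norm_ne_zero_iff.mpr (hB.pow_apply_ne_zero hp hv hv0 n))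
    have horbit : (B ^ n) v = (‖(B ^ n) v‖ : ℂ) • normalizedOrbit B v n := by
      rw [normalizedOrbit, smul_smul, Complex.ofReal_inv, mul_inv_cancel₀ hn, one_smul]
    rw [hB.adjoint_pow_succ_apply hv, horbit, smul_smul]
    exact Submodule.smul_mem _ _ (Submodule.subset_span ⟨n, rfl⟩)

theorem exists_isometryEquiv_weightedShift (hB : QuantumDiscRel p B) (hp : |p| < 1)
    (hne : B * adjoint B ≠ 1) (hirr : IsTopologicallyIrreducible {B, adjoint B}) :
    ∃ U : H ≃ₗᵢ[ℂ] lp (fun _ : ℕ => ℂ) 2, ∀ k : ℕ,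
      U (B (U.symm (stdBasis k))) = ((√(1 - p ^ (k + 1)) : ℝ) : ℂ) • stdBasis (k + 1) := by
  obtain ⟨v, hv0, hv⟩ := hB.exists_adjoint_apply_eq_zero hp hne
  have horth := hB.orthonormal_normalizedOrbit hp hv hv0
  have htotal : (Submodule.span ℂ (Set.range (normalizedOrbit B v))).topologicalClosure = ⊤ := by
    refine hirr.topologicalClosure_span_eq_top ?_ (Set.mem_range_self 0) (horth.ne_zero 0)
    rintro T (rfl | rfl) _ ⟨n, rfl⟩
    · rw [hB.apply_normalizedOrbit hp hv hv0]
      exact Submodule.smul_mem _ _ (Submodule.subset_span ⟨n + 1, rfl⟩)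
    · exact hB.adjoint_normalizedOrbit_mem_span hp hv hv0 n
  let b : HilbertBasis ℕ ℂ H := .mk horth htotal.ge
  have hb (n : ℕ) : b.repr (normalizedOrbit B v n) = stdBasis n := by
    rw [← congrFun (HilbertBasis.coe_mk horth htotal.ge) n]
    exact b.repr_self n
  refine ⟨b.repr, fun k ↦ ?_⟩
  rw [← hb k, LinearIsometryEquiv.symm_apply_apply, hB.apply_normalizedOrbit hp hv hv0, map_smul,
    hb (k + 1)]

end QuantumDiscRel

end Shift

section VacuumOrbits

variable {H : Type*} [NormedAddCommGroup H] [InnerProductSpace ℂ H] [CompleteSpace H]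
  {q : ℝ} {A B T : H →L[ℂ] H} {S : Set (H →L[ℂ] H)} {x : H}

/-- The orbits under `A` of all its vacuum vectors, i.e. of the kernel of `A*`. -/
def vacuumOrbits (A : H →L[ℂ] H) : Set H :=
  {x | ∃ (n : ℕ) (w : H), adjoint A w = 0 ∧ (A ^ n) w = x}

theorem apply_mem_vacuumOrbits (hx : x ∈ vacuumOrbits A) : A x ∈ vacuumOrbits A := by
  obtain ⟨n, w, hw, rfl⟩ := hx
  exact ⟨n + 1, w, hw, by rw [pow_succ', mul_apply_eq_comp]⟩

theorem apply_mem_vacuumOrbits_of_commute (hAT : Commute A T) (hA'T : Commute (adjoint A) T)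
    (hx : x ∈ vacuumOrbits A) : T x ∈ vacuumOrbits A := by
  obtain ⟨n, w, hw, rfl⟩ := hx
  refine ⟨n, T w, ?_, congr($((hAT.pow_left n).eq) w)⟩
  rw [← mul_apply_eq_comp, hA'T.eq, mul_apply_eq_comp, hw, map_zero]

namespace QuantumDiscRel

theorem adjoint_apply_mem_span_vacuumOrbits (hA : QuantumDiscRel q A) (hx : x ∈ vacuumOrbits A) :
    adjoint A x ∈ Submodule.span ℂ (vacuumOrbits A) := by
  obtain ⟨_ | n, w, hw, rfl⟩ := hx
  · simp [hw]
  · rw [hA.adjoint_pow_succ_apply hw]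
    exact Submodule.smul_mem _ _ (Submodule.subset_span ⟨n, w, hw, rfl⟩)

theorem topologicalClosure_span_vacuumOrbits_eq_top (hA : QuantumDiscRel q A) (hq : |q| < 1)
    (hne : A * adjoint A ≠ 1) (hirr : IsTopologicallyIrreducible S)
    (hS : ∀ T ∈ S, T = A ∨ T = adjoint A ∨ Commute A T ∧ Commute (adjoint A) T) :
    (Submodule.span ℂ (vacuumOrbits A)).topologicalClosure = ⊤ := by
  obtain ⟨v, hv0, hv⟩ := hA.exists_adjoint_apply_eq_zero hq hne
  refine hirr.topologicalClosure_span_eq_top (fun T hT x hx ↦ ?_) ⟨0, v, hv, rfl⟩ hv0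
  obtain rfl | rfl | ⟨hAT, hA'T⟩ := hS T hT
  · exact Submodule.subset_span (apply_mem_vacuumOrbits hx)
  · exact hA.adjoint_apply_mem_span_vacuumOrbits hx
  · exact Submodule.subset_span (apply_mem_vacuumOrbits_of_commute hAT hA'T hx)

end QuantumDiscRel

end VacuumOrbits

theorem adjoint_smul_one {𝕜 E : Type*} [RCLike 𝕜] [NormedAddCommGroup E] [InnerProductSpace 𝕜 E]
    [CompleteSpace E] (c : 𝕜) : adjoint (c • (1 : E →L[𝕜] E)) = star c • 1 := by
  rw [← star_eq_adjoint, star_smul, star_one]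

section CommutingPair

variable {H : Type*} [NormedAddCommGroup H] [InnerProductSpace ℂ H] [CompleteSpace H]
  {p q : ℝ} {A B : H →L[ℂ] H}

namespace QuantumDiscRel

theorem mul_adjoint_eq_one_of_ne (hA : QuantumDiscRel q A) (hq : |q| < 1) (hAB : Commute A B)
    (hA'B : Commute (adjoint A) B) (hkey : (1 - A * adjoint A) * (1 - B * adjoint B) = 0)
    (hirr : IsTopologicallyIrreducible {A, adjoint A, B, adjoint B})
    (hne : A * adjoint A ≠ 1) : B * adjoint B = 1 := by
  have hAB' : Commute A (adjoint B) := commute_star_comm.mp hA'B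
  have hA'B' : Commute (adjoint A) (adjoint B) := hAB.star_star
  have htotal := hA.topologicalClosure_span_vacuumOrbits_eq_top hq hne hirr <| by
    rintro T (rfl | rfl | rfl | rfl) <;> simp [*]
  have hD : Commute A (1 - B * adjoint B) := (Commute.one_right A).sub_right (hAB.mul_right hAB')
  have hD' : Commute (adjoint A) (1 - B * adjoint B) :=
    (Commute.one_right _).sub_right (hA'B.mul_right hA'B')
  have hDD : (1 - B * adjoint B) * (1 - A * adjoint A) = 0 := by
    rw [← ((Commute.one_left _).sub_left (hD.mul_left hD')).eq, hkey]
  refine (sub_eq_zero.mp (ContinuousLinearMap.ext_on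
    (Submodule.dense_iff_topologicalClosure_eq_top.mpr htotal) ?_)).symm
  rintro _ ⟨n, w, hw, rfl⟩
  have hDw : (1 - B * adjoint B) w = 0 := by simpa [hw] using congr($hDD w)
  calc (1 - B * adjoint B) ((A ^ n) w) = (A ^ n) ((1 - B * adjoint B) w) :=
        congr($((hD.pow_left n).eq.symm) w)
    _ = 0 := by rw [hDw, map_zero]

variable [Nontrivial H]

theorem exists_eq_exp_smul_one (hA : QuantumDiscRel q A) (hAB : Commute A B)
    (hA'B : Commute (adjoint A) B) (hirr : IsTopologicallyIrreducible {A, adjoint A, B, adjoint B})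
    (hA1 : A * adjoint A = 1) :
    ∃ θ ∈ Set.Ico (0 : ℝ) (2 * Real.pi), A = Complex.exp (θ * Complex.I) • 1 := by
  have hu : A ∈ unitary (H →L[ℂ] H) := hA.mem_unitary hA1
  refine hirr.exists_eq_exp_smul_one hu ?_
  rintro R (rfl | rfl | rfl | rfl)
  exacts [.refl _, (commute_iff_eq _ _).mpr (hA1.trans hu.1.symm), hAB, commute_star_comm.mp hA'B]

theorem exists_isometryEquiv_scalar_weightedShift (hA : QuantumDiscRel q A)
    (hB : QuantumDiscRel p B) (hp : |p| < 1) (hAB : Commute A B) (hA'B : Commute (adjoint A) B)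
    (hirr : IsTopologicallyIrreducible {A, adjoint A, B, adjoint B})
    (hA1 : A * adjoint A = 1) (hB1 : B * adjoint B ≠ 1) :
    ∃ θ ∈ Set.Ico (0 : ℝ) (2 * Real.pi), ∃ U : H ≃ₗᵢ[ℂ] lp (fun _ : ℕ => ℂ) 2,
      (∀ ξ : lp (fun _ : ℕ => ℂ) 2, U (A (U.symm ξ)) = Complex.exp (θ * Complex.I) • ξ) ∧
      (∀ k : ℕ, U (B (U.symm (stdBasis k))) =
        ((√(1 - p ^ (k + 1)) : ℝ) : ℂ) • stdBasis (k + 1)) := by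
  obtain ⟨θ, hθ, rfl⟩ := hA.exists_eq_exp_smul_one hAB hA'B hirr hA1
  have hirrB : IsTopologicallyIrreducible {B, adjoint B} := hirr.of_forall_mem_or_scalar <| by
    rintro T (rfl | rfl | rfl | rfl)
    exacts [.inr ⟨_, rfl⟩, .inr ⟨_, adjoint_smul_one _⟩, by simp, by simp]
  obtain ⟨U, hU⟩ := hB.exists_isometryEquiv_weightedShift hp hB1 hirrB
  exact ⟨θ, hθ, U, fun ξ ↦ by simp, hU⟩

end QuantumDiscRel

end CommutingPair

theorem stmt2_general {H : Type*} [NormedAddCommGroup H] [InnerProductSpace ℂ H] [CompleteSpace H]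
    [Nontrivial H] {p q : ℝ} (hp : |p| < 1) (hq : |q| < 1) {A B : H →L[ℂ] H}
    (hA : QuantumDiscRel q A) (hB : QuantumDiscRel p B) (hAB : Commute A B)
    (hA'B : Commute (adjoint A) B) (hkey : (1 - A * adjoint A) * (1 - B * adjoint B) = 0)
    (hirr : IsTopologicallyIrreducible {A, adjoint A, B, adjoint B}) :
    (∃ θ ∈ Set.Ico (0 : ℝ) (2 * Real.pi), ∃ U : H ≃ₗᵢ[ℂ] lp (fun _ : ℕ => ℂ) 2,
      (∀ ξ : lp (fun _ : ℕ => ℂ) 2, U (A (U.symm ξ)) = Complex.exp (θ * Complex.I) • ξ) ∧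
      (∀ k : ℕ, U (B (U.symm (stdBasis k))) =
        ((√(1 - p ^ (k + 1)) : ℝ) : ℂ) • stdBasis (k + 1))) ∨
    (∃ θ ∈ Set.Ico (0 : ℝ) (2 * Real.pi), ∃ U : H ≃ₗᵢ[ℂ] lp (fun _ : ℕ => ℂ) 2,
      (∀ k : ℕ, U (A (U.symm (stdBasis k))) =
        ((√(1 - q ^ (k + 1)) : ℝ) : ℂ) • stdBasis (k + 1)) ∧
      (∀ ξ : lp (fun _ : ℕ => ℂ) 2, U (B (U.symm ξ)) = Complex.exp (θ * Complex.I) • ξ)) ∨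
    (Module.finrank ℂ H = 1 ∧
      ∃ θ₁ ∈ Set.Ico (0 : ℝ) (2 * Real.pi), ∃ θ₂ ∈ Set.Ico (0 : ℝ) (2 * Real.pi),
        A = Complex.exp (θ₁ * Complex.I) • 1 ∧ B = Complex.exp (θ₂ * Complex.I) • 1) := by
  have hirr' : IsTopologicallyIrreducible {B, adjoint B, A, adjoint A} :=
    hirr.of_forall_mem_or_scalar (by simp)
  have hB'A : Commute (adjoint B) A := (commute_star_comm.mp hA'B).symm
  by_cases hA1 : A * adjoint A = 1
  · by_cases hB1 : B * adjoint B = 1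
    · obtain ⟨θ₁, hθ₁, rfl⟩ := hA.exists_eq_exp_smul_one hAB hA'B hirr hA1
      obtain ⟨θ₂, hθ₂, rfl⟩ := hB.exists_eq_exp_smul_one hAB.symm hB'A hirr' hB1
      refine .inr (.inr ⟨hirr.finrank_eq_one_of_forall_eq_smul_one ?_,
        θ₁, hθ₁, θ₂, hθ₂, rfl, rfl⟩)
      rintro T (rfl | rfl | rfl | rfl)
      exacts [⟨_, rfl⟩, ⟨_, adjoint_smul_one _⟩, ⟨_, rfl⟩, ⟨_, adjoint_smul_one _⟩]
    · exact .inl (hA.exists_isometryEquiv_scalar_weightedShift hB hp hAB hA'B hirr hA1 hB1)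
  · have hB1 := hA.mul_adjoint_eq_one_of_ne hq hAB hA'B hkey hirr hA1
    obtain ⟨θ, hθ, U, hUB, hUA⟩ :=
      hB.exists_isometryEquiv_scalar_weightedShift hA hq hAB.symm hB'A hirr' hB1 hA1
    exact .inr (.inl ⟨θ, hθ, U, hUA, hUB⟩)

/-- classification of the bounded irreducible `*`-representations of
`O(S³_pq)`: infinite-dimensional ones are, up to unitary equivalence, one of the two
`S¹`-families of weighted-shift representations on `ℓ²(ℕ)`, and the remaining ones are
the one-dimensional classical points. -/
theorem stmt2 {H : Type*} [NormedAddCommGroup H] [InnerProductSpace ℂ H] [CompleteSpace H]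
    [Nontrivial H] (p q : ℝ) (hp0 : 0 < p) (hp1 : p < 1) (hq0 : 0 < q) (hq1 : q < 1)
    (A B : H →L[ℂ] H)
    (hA : adjoint A * A - (q : ℂ) • (A * adjoint A) = ((1 - q : ℝ) : ℂ) • (1 : H →L[ℂ] H))
    (hB : adjoint B * B - (p : ℂ) • (B * adjoint B) = ((1 - p : ℝ) : ℂ) • (1 : H →L[ℂ] H))
    (hab : A * B = B * A) (ha'b : adjoint A * B = B * adjoint A)
    (hkey : ((1 : H →L[ℂ] H) - A * adjoint A) * ((1 : H →L[ℂ] H) - B * adjoint B) = 0)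
    (hirr : ∀ K : Submodule ℂ H, IsClosed (K : Set H) →
      (∀ x ∈ K, A x ∈ K) → (∀ x ∈ K, adjoint A x ∈ K) →
      (∀ x ∈ K, B x ∈ K) → (∀ x ∈ K, adjoint B x ∈ K) → K = ⊥ ∨ K = ⊤) :
    (∃ θ ∈ Set.Ico (0 : ℝ) (2 * Real.pi), ∃ U : H ≃ₗᵢ[ℂ] lp (fun _ : ℕ => ℂ) 2,
      (∀ ξ : lp (fun _ : ℕ => ℂ) 2, U (A (U.symm ξ)) = Complex.exp (θ * Complex.I) • ξ) ∧
      (∀ k : ℕ, U (B (U.symm (stdBasis k))) =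
        ((Real.sqrt (1 - p ^ (k + 1)) : ℝ) : ℂ) • stdBasis (k + 1))) ∨
    (∃ θ ∈ Set.Ico (0 : ℝ) (2 * Real.pi), ∃ U : H ≃ₗᵢ[ℂ] lp (fun _ : ℕ => ℂ) 2,
      (∀ k : ℕ, U (A (U.symm (stdBasis k))) =
        ((Real.sqrt (1 - q ^ (k + 1)) : ℝ) : ℂ) • stdBasis (k + 1)) ∧
      (∀ ξ : lp (fun _ : ℕ => ℂ) 2, U (B (U.symm ξ)) = Complex.exp (θ * Complex.I) • ξ)) ∨
    (Module.finrank ℂ H = 1 ∧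
      ∃ θ₁ ∈ Set.Ico (0 : ℝ) (2 * Real.pi), ∃ θ₂ ∈ Set.Ico (0 : ℝ) (2 * Real.pi),
        A = Complex.exp (θ₁ * Complex.I) • (1 : H →L[ℂ] H) ∧
        B = Complex.exp (θ₂ * Complex.I) • (1 : H →L[ℂ] H)) :=
  stmt2_general (abs_lt.mpr ⟨by linarith, hp1⟩) (abs_lt.mpr ⟨by linarith, hq1⟩) hA hB hab ha'b
    hkey fun K hK h ↦ hirr K hK (h A (by simp)) (h _ (by simp)) (h B (by simp)) (h _ (by simp))
end

section
/- Let H be a complex Hilbert space and B a bounded linear operator on H satisfying B*B − p·BB* = (1−p)·I. Then ‖B‖ ≤ 1; consequently 0 ≤ BB* ≤ I, the operator I − BB* is self-adjoint with 0 ≤ I − BB* ≤ I, and the spectrum of I − BB* is contained in the real interval [0,1]. -/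
/-!
By the C⋆-identity `b⋆b` and `bb⋆` both have norm `‖b‖²`, so for `p ≥ 0` the reverse triangle
inequality bounds the norm of `b⋆b - p bb⋆` below by `|1 - p| ‖b‖²`. When this element equals
`(1 - p) 1` and `p ≠ 1`, it follows that `‖b‖ ≤ 1`. Then `bb⋆`, and with it `1 - bb⋆`, lies in
the order interval `[0, 1]`, and the functional calculus turns this into the inclusion of spectra.
-/

open Set

theorem abs_one_sub_norm_mul_norm_sq_le_norm_sub_smul {𝕜 A : Type*} [NormedField 𝕜]
    [NonUnitalNormedRing A] [StarRing A] [CStarRing A] [NormedSpace 𝕜 A] (p : 𝕜) (b : A) :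
    |1 - ‖p‖| * ‖b‖ ^ 2 ≤ ‖star b * b - p • (b * star b)‖ :=
  calc |1 - ‖p‖| * ‖b‖ ^ 2
    _ = |(1 - ‖p‖) * ‖b‖ ^ 2| := by rw [abs_mul, abs_sq]
    _ = |‖star b * b‖ - ‖p • (b * star b)‖| := by
      rw [norm_smul, CStarRing.norm_star_mul_self, CStarRing.norm_self_mul_star]
      ring_nf
    _ ≤ ‖star b * b - p • (b * star b)‖ := abs_norm_sub_norm_le _ _

theorem norm_le_one_of_star_mul_self_sub_smul_eq {A : Type*} [NormedRing A] [StarRing A]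
    [CStarRing A] [NormedSpace ℝ A] {p : ℝ} (hp0 : 0 ≤ p) (hp1 : p ≠ 1) {b : A}
    (hb : star b * b - p • (b * star b) = (1 - p) • (1 : A)) : ‖b‖ ≤ 1 := by
  nontriviality A
  have hpos : 0 < |1 - p| := abs_pos.mpr (sub_ne_zero.mpr hp1.symm)
  have hle : |1 - p| * ‖b‖ ^ 2 ≤ |1 - p| * 1 := by
    simpa only [Real.norm_of_nonneg hp0, hb, norm_smul, Real.norm_eq_abs, CStarRing.norm_one]
      using abs_one_sub_norm_mul_norm_sq_le_norm_sub_smul p b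
  exact (sq_le_one_iff₀ (norm_nonneg b)).mp (le_of_mul_le_mul_left hle hpos)

theorem mem_Icc_algebraMap_iff_spectrum_subset {R A : Type*} {P : A → Prop} [CommRing R]
    [PartialOrder R] [StarRing R] [MetricSpace R] [IsTopologicalRing R] [ContinuousStar R]
    [ContinuousSqrt R] [StarOrderedRing R] [TopologicalSpace A] [Ring A] [StarRing A]
    [PartialOrder A] [StarOrderedRing A] [Algebra R A] [ContinuousFunctionalCalculus R A P]
    [NonnegSpectrumClass R A] {a : A} (ha : P a) {r s : R} :
    a ∈ Icc (algebraMap R A r) (algebraMap R A s) ↔ spectrum R a ⊆ Icc r s := by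
  rw [mem_Icc, algebraMap_le_iff_le_spectrum ha, le_algebraMap_iff_spectrum_le ha]
  exact forall₂_and.symm

section CStarAlgebra

variable {A : Type*} [CStarAlgebra A] [PartialOrder A] [StarOrderedRing A]

theorem self_mul_star_mem_Icc_of_norm_le_one {b : A} (hb : ‖b‖ ≤ 1) :
    b * star b ∈ Icc 0 1 := by
  refine CStarAlgebra.mem_Icc_iff_norm_le_one.mpr ⟨mul_star_self_nonneg b, ?_⟩
  rw [CStarRing.norm_self_mul_star]
  exact mul_le_one₀ hb (norm_nonneg b) hb

theorem spectrum_complex_subset_ofReal_image_Icc {a : A} {r s : ℝ}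
    (ha : a ∈ Icc (algebraMap ℝ A r) (algebraMap ℝ A s)) :
    spectrum ℂ a ⊆ Complex.ofReal '' Icc r s := by
  have hsa : IsSelfAdjoint a := .of_ge ha.1 (.algebraMap A (.all r))
  rw [← hsa.spectrumRestricts.algebraMap_image]
  exact image_mono ((mem_Icc_algebraMap_iff_spectrum_subset hsa).mp ha)

theorem stmt3_general {p : ℝ} (hp0 : 0 ≤ p) (hp1 : p ≠ 1) {b : A}
    (hb : star b * b - p • (b * star b) = (1 - p) • (1 : A)) :
    ‖b‖ ≤ 1 ∧ 0 ≤ b * star b ∧ 0 ≤ 1 - b * star b ∧ IsSelfAdjoint (1 - b * star b) ∧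
      spectrum ℂ (1 - b * star b) ⊆ Complex.ofReal '' Icc (0 : ℝ) 1 := by
  have hnorm : ‖b‖ ≤ 1 := norm_le_one_of_star_mul_self_sub_smul_eq hp0 hp1 hb
  have hmem : 1 - b * star b ∈ Icc 0 1 :=
    sub_mem_Icc_zero_iff_right.mpr (self_mul_star_mem_Icc_of_norm_le_one hnorm)
  exact ⟨hnorm, mul_star_self_nonneg b, hmem.1, .of_nonneg hmem.1,
    spectrum_complex_subset_ofReal_image_Icc (by simpa only [map_zero, map_one] using hmem)⟩

end CStarAlgebra

open ContinuousLinearMap in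
/-- if `B*B − p·BB* = (1−p)·I` on a complex Hilbert space with `0 < p < 1`,
then `‖B‖ ≤ 1`, `0 ≤ BB* ≤ I`, `I − BB*` is self-adjoint with `0 ≤ I − BB* ≤ I`, and the
spectrum of `I − BB*` is contained in `[0,1] ⊆ ℝ`. -/
theorem stmt3 {H : Type*} [NormedAddCommGroup H] [InnerProductSpace ℂ H] [CompleteSpace H]
    (p : ℝ) (hp0 : 0 < p) (hp1 : p < 1) (B : H →L[ℂ] H)
    (hrel : adjoint B * B - (p : ℂ) • (B * adjoint B) = ((1 - p : ℝ) : ℂ) • (1 : H →L[ℂ] H)) :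
    ‖B‖ ≤ 1 ∧
    (B * adjoint B).IsPositive ∧
    ((1 : H →L[ℂ] H) - B * adjoint B).IsPositive ∧
    IsSelfAdjoint ((1 : H →L[ℂ] H) - B * adjoint B) ∧
    spectrum ℂ ((1 : H →L[ℂ] H) - B * adjoint B) ⊆ Complex.ofReal '' Set.Icc (0 : ℝ) 1 := by
  simp only [← nonneg_iff_isPositive, ← star_eq_adjoint, Complex.coe_smul] at hrel ⊢
  exact stmt3_general hp0.le hp1.ne hrel
end

section
/- Let H be a complex Hilbert space and B a bounded linear operator on H satisfying B*B − p·BB* = (1−p)·I. If λ is a real number with 0 < λ < 1 and λ lies in the spectrum of I − BB*, then λ/p also lies in the spectrum of I − BB*. -/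
/-!
Put `T = 1 - b * a`. The relation `a * b - q • (b * a) = (1 - q) • 1` says exactly that
`1 - a * b = q • T`, so the spectrum of `1 - a * b` is that of `T` scaled by `q`. But `a * b` and
`b * a` have the same nonzero spectrum, so the spectra of `1 - a * b` and `T` agree away from `1`.
For `B` on a Hilbert space, take `a = B*`, `b = B`, `q = p` and compare the points `r = λ / p` and
`q * r = λ`.
-/

section Spectrum

lemma sub_smul_eq_one_sub_smul_iff {R M : Type*} [Ring R] [AddCommGroup M] [Module R M]
    {q : R} {x y z : M} : x - q • y = (1 - q) • z ↔ z - x = q • (z - y) := by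
  rw [sub_smul, one_smul, smul_sub]
  grind

variable {R A : Type*} [CommRing R] [Ring A] [Algebra R A]

lemma mem_spectrum_algebraMap_sub_iff {r s : R} {a : A} :
    r ∈ spectrum R (algebraMap R A s - a) ↔ s - r ∈ spectrum R a := by
  rw [spectrum.mem_iff, spectrum.mem_iff, ← IsUnit.neg_iff, neg_sub, map_sub, sub_right_comm]

lemma mem_spectrum_algebraMap_sub_mul_comm {r s : R} (hrs : IsUnit (s - r)) {a b : A} :
    r ∈ spectrum R (algebraMap R A s - a * b) ↔ r ∈ spectrum R (algebraMap R A s - b * a) := by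
  obtain ⟨u, hu⟩ := hrs
  rw [mem_spectrum_algebraMap_sub_iff, mem_spectrum_algebraMap_sub_iff, ← hu,
    spectrum.unit_mem_mul_comm]

theorem stmt4_general {q r : R} (hq : IsUnit q) (hr : IsUnit (1 - q * r)) {a b : A}
    (hrel : a * b - q • (b * a) = (1 - q) • 1) :
    q * r ∈ spectrum R (1 - b * a) ↔ r ∈ spectrum R (1 - b * a) := by
  obtain ⟨u, rfl⟩ := hq
  have hscale : 1 - a * b = u • (1 - b * a) := sub_smul_eq_one_sub_smul_iff.mp hrel
  calc u * r ∈ spectrum R (1 - b * a)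
    _ ↔ u * r ∈ spectrum R (1 - a * b) := by
      simpa only [map_one] using mem_spectrum_algebraMap_sub_mul_comm hr (a := b) (b := a)
    _ ↔ u • r ∈ spectrum R (u • (1 - b * a)) := by rw [hscale, Units.smul_def u r, smul_eq_mul]
    _ ↔ r ∈ spectrum R (1 - b * a) := spectrum.smul_mem_smul_iff

end Spectrum

open ContinuousLinearMap in
/-- if `B*B − p·BB* = (1−p)·I` with `0 < p < 1`, and `λ ∈ (0,1)` lies in the
spectrum of `I − BB*`, then so does `λ/p`. -/
theorem stmt4 {H : Type*} [NormedAddCommGroup H] [InnerProductSpace ℂ H] [CompleteSpace H]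
    (p : ℝ) (hp0 : 0 < p) (hp1 : p < 1) (B : H →L[ℂ] H)
    (hrel : adjoint B * B - (p : ℂ) • (B * adjoint B) = ((1 - p : ℝ) : ℂ) • (1 : H →L[ℂ] H))
    (lam : ℝ) (hlam0 : 0 < lam) (hlam1 : lam < 1)
    (hsp : (lam : ℂ) ∈ spectrum ℂ ((1 : H →L[ℂ] H) - B * adjoint B)) :
    ((lam / p : ℝ) : ℂ) ∈ spectrum ℂ ((1 : H →L[ℂ] H) - B * adjoint B) := by
  have hlam : (p : ℂ) * ((lam / p : ℝ) : ℂ) = lam := mod_cast mul_div_cancel₀ lam hp0.ne'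
  have hunit : IsUnit (1 - (lam : ℂ)) := .mk0 _ (mod_cast (sub_pos.mpr hlam1).ne')
  exact (stmt4_general (.mk0 _ (mod_cast hp0.ne')) (hlam ▸ hunit) (mod_cast hrel)).mp (hlam ▸ hsp)
end

section
/- Let H be a complex Hilbert space and B a bounded linear operator on H satisfying B*B − p·BB* = (1−p)·I. Suppose ξ ∈ H with ‖ξ‖ = 1 and (I−BB*)ξ = ξ. Then B*ξ = 0, and ‖B^{k+1}ξ‖² = (1−p^{k+1})·‖B^{k}ξ‖² for all k ≥ 0 (so B^{k}ξ ≠ 0 for all k). Consequently the vectors e_k := B^{k}ξ / ‖B^{k}ξ‖, k ≥ 0, form an orthonormal sequence in H satisfying (I−BB*)e_k = p^{k}·e_k, B e_k = √(1−p^{k+1})·e_{k+1} for all k ≥ 0, B* e_0 = 0, and B* e_k = √(1−p^{k})·e_{k−1} for all k ≥ 1. -/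
/-! Write `A` for the adjoint of `B` and put `D = 1 - B * A`. The relation says that
`A * B = 1 - p • D`; multiplied by `B` on the left, it becomes `D * B = p • (B * D)`. Hence
`(B ^ k) ξ` is an eigenvector of `D` with eigenvalue `p ^ k`, and then
`A ((B ^ (k + 1)) ξ) = (1 - p ^ (k + 1)) • (B ^ k) ξ`. So `B` and `A` raise and lower along the
orbit of `ξ`, and positivity of the lowering weights turns such a ladder into an orthonormal one. -/

open scoped InnerProductSpace

section Algebra

variable {K R : Type*} [CommRing K] [Ring R] [Algebra K R] {p : K} {a b : R}

theorem mul_eq_one_sub_smul_one_sub_mul (hrel : a * b - p • (b * a) = (1 - p) • (1 : R)) :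
    a * b = 1 - p • (1 - b * a) := by
  rw [sub_eq_iff_eq_add] at hrel
  rw [hrel]
  module

theorem one_sub_mul_mul_pow (hrel : a * b - p • (b * a) = (1 - p) • (1 : R)) (k : ℕ) :
    (1 - b * a) * b ^ k = p ^ k • (b ^ k * (1 - b * a)) := by
  have h_comm : (1 - b * a) * b = p • (b * (1 - b * a)) := by
    rw [sub_mul, one_mul, mul_assoc, mul_eq_one_sub_smul_one_sub_mul hrel, mul_sub, mul_one,
      mul_smul_comm, sub_sub_cancel]
  induction k with
  | zero => simp
  | succ k ih =>
    rw [pow_succ, ← mul_assoc, ih, smul_mul_assoc, mul_assoc, h_comm, mul_smul_comm, smul_smul,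
      ← mul_assoc, ← pow_succ]

end Algebra

section Module

variable {K S M : Type*} [CommRing K] [Ring S] [Algebra K S] [AddCommGroup M] [Module K M]
  [Module S M] [IsScalarTower K S M] {p : K} {A B : Module.End S M} {v : M}

theorem one_sub_mul_apply_pow (hrel : A * B - p • (B * A) = (1 - p) • (1 : Module.End S M))
    (hv : (1 - B * A) v = v) (k : ℕ) : (1 - B * A) ((B ^ k) v) = p ^ k • (B ^ k) v := by
  rw [← Module.End.mul_apply, one_sub_mul_mul_pow hrel, LinearMap.smul_apply,
    Module.End.mul_apply, hv]

theorem apply_pow_succ_eq_smul (hrel : A * B - p • (B * A) = (1 - p) • (1 : Module.End S M))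
    (hv : (1 - B * A) v = v) (k : ℕ) :
    A ((B ^ (k + 1)) v) = (1 - p ^ (k + 1)) • (B ^ k) v := by
  rw [pow_succ', Module.End.mul_apply, ← Module.End.mul_apply, mul_eq_one_sub_smul_one_sub_mul hrel,
    LinearMap.sub_apply, LinearMap.smul_apply, one_sub_mul_apply_pow hrel hv, smul_smul,
    ← pow_succ', Module.End.one_apply, sub_smul, one_smul]

end Module

section FormalAdjoint

variable {𝕜 E F : Type*} [RCLike 𝕜] [SeminormedAddCommGroup E] [InnerProductSpace 𝕜 E]
  [NormedAddCommGroup F] [InnerProductSpace 𝕜 F]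

theorem apply_eq_zero_of_adjoint_apply_apply_eq_zero {A : E → F} {B : F → E}
    (hadj : ∀ x y, ⟪A x, y⟫_𝕜 = ⟪x, B y⟫_𝕜) {x : E} (hx : B (A x) = 0) : A x = 0 := by
  rw [← inner_self_eq_zero (𝕜 := 𝕜), hadj, hx, inner_zero_right]

end FormalAdjoint

section Ladder

variable {𝕜 E : Type*} [RCLike 𝕜] [NormedAddCommGroup E] [InnerProductSpace 𝕜 E]
  [NormedSpace ℝ E]

/-- A ladder `x 0, x 1, …` of unnormalized vectors: `B` raises, and its formal adjoint `A` lowers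
with weights `w` and annihilates the bottom vector. The weight `w k` belongs to the step between
`x k` and `x (k + 1)`. -/
structure IsLadder (A B : E →ₗ[𝕜] E) (w : ℕ → ℝ) (x : ℕ → E) : Prop where
  inner_lower_left : ∀ u v, ⟪A u, v⟫_𝕜 = ⟪u, B v⟫_𝕜
  raise : ∀ k, B (x k) = x (k + 1)
  lower_zero : A (x 0) = 0
  lower_succ : ∀ k, A (x (k + 1)) = w k • x k

namespace IsLadder

variable [IsScalarTower ℝ 𝕜 E] {A B : E →ₗ[𝕜] E} {w : ℕ → ℝ} {x : ℕ → E}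

theorem norm_succ_sq (h : IsLadder A B w x) (k : ℕ) : ‖x (k + 1)‖ ^ 2 = w k * ‖x k‖ ^ 2 := by
  have h_inner : ⟪x (k + 1), x (k + 1)⟫_𝕜 = w k • ⟪x k, x k⟫_𝕜 := by
    rw [← inner_smul_left_eq_smul, ← h.lower_succ, h.inner_lower_left, h.raise]
  rw [norm_sq_eq_re_inner (𝕜 := 𝕜), norm_sq_eq_re_inner (𝕜 := 𝕜), h_inner, RCLike.smul_re]

theorem norm_succ (h : IsLadder A B w x) (k : ℕ) : ‖x (k + 1)‖ = √(w k) * ‖x k‖ := by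
  rw [← Real.sqrt_sq (norm_nonneg (x (k + 1))), h.norm_succ_sq, Real.sqrt_mul' _ (sq_nonneg _),
    Real.sqrt_sq (norm_nonneg _)]

theorem ne_zero (h : IsLadder A B w x) (hw : ∀ k, 0 < w k) (hx : x 0 ≠ 0) (k : ℕ) :
    x k ≠ 0 := by
  induction k with
  | zero => exact hx
  | succ k ih =>
    rw [← norm_pos_iff, h.norm_succ]
    exact mul_pos (Real.sqrt_pos.2 (hw k)) (norm_pos_iff.2 ih)

theorem inner_eq_zero_of_lt (h : IsLadder A B w x) {j k : ℕ} (hjk : j < k) :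
    ⟪x j, x k⟫_𝕜 = 0 := by
  induction j generalizing k with
  | zero =>
    obtain ⟨k, rfl⟩ := Nat.exists_eq_add_one.2 hjk
    rw [← h.raise, ← h.inner_lower_left, h.lower_zero, inner_zero_left]
  | succ j ih =>
    obtain ⟨k, rfl⟩ := Nat.exists_eq_add_one.2 (Nat.zero_lt_of_lt hjk)
    rw [← h.raise k, ← h.inner_lower_left, h.lower_succ, inner_smul_left_eq_smul,
      ih (Nat.lt_of_succ_lt_succ hjk), smul_zero]

theorem orthonormal_normalize (h : IsLadder A B w x) (hw : ∀ k, 0 < w k) (hx : x 0 ≠ 0) :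
    Orthonormal 𝕜 fun k ↦ NormedSpace.normalize (x k) := by
  refine ⟨fun k ↦ NormedSpace.norm_normalize (h.ne_zero hw hx k), fun j k hjk ↦ ?_⟩
  have h_inner : ⟪x j, x k⟫_𝕜 = 0 := hjk.lt_or_gt.elim h.inner_eq_zero_of_lt
    fun hkj ↦ inner_eq_zero_symm.1 (h.inner_eq_zero_of_lt hkj)
  simp only [NormedSpace.normalize, inner_smul_left_eq_smul, inner_smul_right_eq_smul, h_inner,
    smul_zero]

theorem raise_normalize (h : IsLadder A B w x) (k : ℕ) :
    B (NormedSpace.normalize (x k)) = √(w k) • NormedSpace.normalize (x (k + 1)) := by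
  obtain hk | hk := eq_or_ne (x k) 0
  · simp [← h.raise, hk]
  calc B (NormedSpace.normalize (x k)) = ‖x k‖⁻¹ • x (k + 1) := by
        rw [NormedSpace.normalize, LinearMap.map_smul_of_tower, h.raise]
    _ = ‖x k‖⁻¹ • ‖x (k + 1)‖ • NormedSpace.normalize (x (k + 1)) := by
        rw [NormedSpace.norm_smul_normalize]
    _ = √(w k) • NormedSpace.normalize (x (k + 1)) := by
        rw [h.norm_succ, smul_smul, mul_comm, mul_inv_cancel_right₀ (norm_ne_zero_iff.2 hk)]

theorem lower_normalize_zero (h : IsLadder A B w x) : A (NormedSpace.normalize (x 0)) = 0 := by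
  rw [NormedSpace.normalize, LinearMap.map_smul_of_tower, h.lower_zero, smul_zero]

theorem lower_normalize_succ (h : IsLadder A B w x) (k : ℕ) :
    A (NormedSpace.normalize (x (k + 1))) = √(w k) • NormedSpace.normalize (x k) := by
  obtain hk | hk := eq_or_ne (x k) 0
  · simp [← h.raise, hk]
  calc A (NormedSpace.normalize (x (k + 1)))
      = ‖x (k + 1)‖⁻¹ • w k • ‖x k‖ • NormedSpace.normalize (x k) := by
        rw [NormedSpace.norm_smul_normalize, NormedSpace.normalize, LinearMap.map_smul_of_tower,
          h.lower_succ]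
    _ = (w k / √(w k)) • NormedSpace.normalize (x k) := by
        rw [h.norm_succ, smul_smul, smul_smul]
        congr 1
        have := norm_ne_zero_iff.2 hk
        field_simp
    _ = √(w k) • NormedSpace.normalize (x k) := by rw [Real.div_sqrt]

end IsLadder

variable [IsScalarTower ℝ 𝕜 E] {p : ℝ} {A B : Module.End 𝕜 E} {ξ : E}

theorem isLadder_pow_apply (hadj : ∀ u v, ⟪A u, v⟫_𝕜 = ⟪u, B v⟫_𝕜)
    (hrel : A * B - p • (B * A) = (1 - p) • (1 : Module.End 𝕜 E)) (heig : (1 - B * A) ξ = ξ) :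
    IsLadder A B (fun k ↦ 1 - p ^ (k + 1)) (fun k ↦ (B ^ k) ξ) where
  inner_lower_left := hadj
  raise k := by rw [pow_succ', Module.End.mul_apply]
  lower_zero := apply_eq_zero_of_adjoint_apply_apply_eq_zero hadj (by simpa using heig)
  lower_succ := apply_pow_succ_eq_smul hrel heig

theorem stmt6_general (hp : |p| < 1) (hadj : ∀ u v, ⟪A u, v⟫_𝕜 = ⟪u, B v⟫_𝕜)
    (hrel : A * B - p • (B * A) = (1 - p) • (1 : Module.End 𝕜 E)) (hξ : ξ ≠ 0)
    (heig : (1 - B * A) ξ = ξ) :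
    A ξ = 0 ∧
    (∀ k : ℕ, ‖(B ^ (k + 1)) ξ‖ ^ 2 = (1 - p ^ (k + 1)) * ‖(B ^ k) ξ‖ ^ 2) ∧
    (∀ k : ℕ, (B ^ k) ξ ≠ 0) ∧
    Orthonormal 𝕜 (fun k : ℕ ↦ NormedSpace.normalize ((B ^ k) ξ)) ∧
    (∀ k : ℕ, (1 - B * A) (NormedSpace.normalize ((B ^ k) ξ)) =
      p ^ k • NormedSpace.normalize ((B ^ k) ξ)) ∧
    (∀ k : ℕ, B (NormedSpace.normalize ((B ^ k) ξ)) =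
      √(1 - p ^ (k + 1)) • NormedSpace.normalize ((B ^ (k + 1)) ξ)) ∧
    A (NormedSpace.normalize ((B ^ 0) ξ)) = 0 ∧
    (∀ k : ℕ, 1 ≤ k → A (NormedSpace.normalize ((B ^ k) ξ)) =
      √(1 - p ^ k) • NormedSpace.normalize ((B ^ (k - 1)) ξ)) := by
  have h := isLadder_pow_apply hadj hrel heig
  have hw (k : ℕ) : 0 < 1 - p ^ (k + 1) :=
    sub_pos.2 (lt_of_abs_lt (abs_pow p _ ▸ pow_lt_one₀ (abs_nonneg p) hp k.succ_ne_zero))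
  refine ⟨h.lower_zero, h.norm_succ_sq, h.ne_zero hw hξ, h.orthonormal_normalize hw hξ,
    fun k ↦ ?_, h.raise_normalize, h.lower_normalize_zero, fun k hk ↦ ?_⟩
  · rw [NormedSpace.normalize, LinearMap.map_smul_of_tower, one_sub_mul_apply_pow hrel heig,
      smul_comm]
  · obtain ⟨k, rfl⟩ := Nat.exists_eq_add_one.2 hk
    exact h.lower_normalize_succ k

end Ladder

open ContinuousLinearMap in
/-- starting from a unit vector `ξ` with `(I−BB*)ξ = ξ`, the vectors
`e_k := B^k ξ / ‖B^k ξ‖` form an orthonormal sequence of eigenvectors of `I − BB*`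
on which `B` and `B*` act as weighted shifts. -/
theorem stmt6 {H : Type*} [NormedAddCommGroup H] [InnerProductSpace ℂ H] [CompleteSpace H]
    (p : ℝ) (hp0 : 0 < p) (hp1 : p < 1) (B : H →L[ℂ] H)
    (hrel : adjoint B * B - (p : ℂ) • (B * adjoint B) = ((1 - p : ℝ) : ℂ) • (1 : H →L[ℂ] H))
    (ξ : H) (hξ : ‖ξ‖ = 1) (heig : ((1 : H →L[ℂ] H) - B * adjoint B) ξ = ξ) :
    adjoint B ξ = 0 ∧
    (∀ k : ℕ, ‖(B ^ (k + 1)) ξ‖ ^ 2 = (1 - p ^ (k + 1)) * ‖(B ^ k) ξ‖ ^ 2) ∧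
    (∀ k : ℕ, (B ^ k) ξ ≠ 0) ∧
    Orthonormal ℂ (fun k : ℕ => (‖(B ^ k) ξ‖⁻¹ : ℝ) • (B ^ k) ξ) ∧
    (∀ k : ℕ, ((1 : H →L[ℂ] H) - B * adjoint B) ((‖(B ^ k) ξ‖⁻¹ : ℝ) • (B ^ k) ξ) =
      ((p ^ k : ℝ) : ℂ) • ((‖(B ^ k) ξ‖⁻¹ : ℝ) • (B ^ k) ξ)) ∧
    (∀ k : ℕ, B ((‖(B ^ k) ξ‖⁻¹ : ℝ) • (B ^ k) ξ) =
      ((Real.sqrt (1 - p ^ (k + 1)) : ℝ) : ℂ) • ((‖(B ^ (k + 1)) ξ‖⁻¹ : ℝ) • (B ^ (k + 1)) ξ)) ∧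
    adjoint B ((‖(B ^ 0) ξ‖⁻¹ : ℝ) • (B ^ 0) ξ) = 0 ∧
    (∀ k : ℕ, 1 ≤ k → adjoint B ((‖(B ^ k) ξ‖⁻¹ : ℝ) • (B ^ k) ξ) =
      ((Real.sqrt (1 - p ^ k) : ℝ) : ℂ) • ((‖(B ^ (k - 1)) ξ‖⁻¹ : ℝ) • (B ^ (k - 1)) ξ)) := by
  have h := stmt6_general (A := (adjoint B).toLinearMap) (B := B.toLinearMap)
    ((abs_of_pos hp0).trans_lt hp1) (fun u v ↦ adjoint_inner_left B v u) (LinearMap.ext fun v ↦ by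
      simpa [← Complex.ofReal_one, ← Complex.ofReal_sub] using DFunLike.congr_fun hrel v)
    (norm_ne_zero_iff.1 (hξ ▸ one_ne_zero)) heig
  simpa only [← toLinearMap_pow, Complex.coe_smul] using! h
end

section
/- Let H be a complex Hilbert space and B a bounded linear operator on H satisfying B*B − p·BB* = (1−p)·I. Then the spectrum of I − BB* is contained in {p^{k} : k ∈ ℕ} ∪ {0}. If moreover H ≠ {0} and I − BB* is injective, then the spectrum of I − BB* equals {p^{k} : k ∈ ℕ} ∪ {0}. -/
/-!
Put `q = 1 - bb*`. The relation says `1 - b*b = p q`, and `b*b`, `bb*` have the same nonzero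
spectrum, so `σ(q)` and `p σ(q)` agree away from `1`. Dividing repeatedly by `p`, a point of the
bounded set `σ(q)` either is a power of `p` or has norm at most a constant times `|p|ⁿ` for every
`n`. If `1 ∉ σ(q)` the first alternative never occurs, so `σ(q) ⊆ {0}`, and the self-adjoint `q`
vanishes. If `1 ∈ σ(q)`, multiplying by `p` produces all powers of `p`, and `σ(q)` contains their
limit `0`.
-/

open Bornology Filter Set Topology
open scoped Pointwise

section Contraction

theorem subset_iUnion_pow_smul_union_pow_smul {M α : Type*} [Monoid M] [MulAction M α] {p : M}
    {S T : Set α} (hS : S ⊆ T ∪ p • S) (n : ℕ) : S ⊆ (⋃ k : ℕ, p ^ k • T) ∪ p ^ n • S := by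
  induction n with
  | zero => simp
  | succ n ih =>
    have hpow : p ^ n • S ⊆ p ^ n • T ∪ p ^ (n + 1) • S := by
      simpa only [smul_set_union, smul_smul, ← pow_succ] using smul_set_mono (a := p ^ n) hS
    exact ih.trans <| union_subset subset_union_left <| hpow.trans <|
      union_subset_union_left _ (subset_iUnion (fun k : ℕ ↦ p ^ k • T) n)

variable {𝕜 E : Type*} [NormedField 𝕜] [NormedAddCommGroup E] [NormedSpace 𝕜 E] {p : 𝕜}

theorem iInter_pow_smul_subset_zero {S : Set E} (hS : IsBounded S) (hp : ‖p‖ < 1) :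
    ⋂ n : ℕ, p ^ n • S ⊆ {0} := by
  intro x hx
  obtain ⟨C, hC⟩ := hS.exists_norm_le
  have hbound (n : ℕ) : ‖x‖ ≤ ‖p‖ ^ n * C := by
    obtain ⟨y, hy, rfl⟩ := mem_iInter.mp hx n
    rw [norm_smul, norm_pow]
    exact mul_le_mul_of_nonneg_left (hC y hy) (by positivity)
  have hlim : Tendsto (fun n : ℕ ↦ ‖p‖ ^ n * C) atTop (𝓝 0) := by
    simpa using (tendsto_pow_atTop_nhds_zero_of_lt_one (norm_nonneg p) hp).mul_const C
  exact norm_le_zero_iff.mp (ge_of_tendsto' hlim hbound)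

theorem subset_iUnion_pow_smul_union_zero {S T : Set E} (hS : IsBounded S) (hp : ‖p‖ < 1)
    (hST : S ⊆ T ∪ p • S) : S ⊆ (⋃ k : ℕ, p ^ k • T) ∪ {0} := by
  intro x hx
  refine or_iff_not_imp_left.mpr fun hxT ↦ iInter_pow_smul_subset_zero hS hp ?_
  exact mem_iInter.mpr fun n ↦
    (subset_iUnion_pow_smul_union_pow_smul hST n hx).resolve_left hxT

theorem range_pow_union_zero_subset {S : Set 𝕜} (hS : IsClosed S) (hp : ‖p‖ < 1) (h1 : 1 ∈ S)
    (hpS : p • S \ {1} ⊆ S) : range (fun k : ℕ ↦ p ^ k) ∪ {0} ⊆ S := by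
  have hpow (k : ℕ) : p ^ k ∈ S := by
    induction k with
    | zero => simpa using h1
    | succ k ih =>
      refine hpS ⟨⟨p ^ k, ih, (pow_succ' p k).symm⟩, fun h ↦ ?_⟩
      have hnorm : ‖p‖ ^ (k + 1) < 1 := pow_lt_one₀ (norm_nonneg p) hp k.succ_ne_zero
      rw [← norm_pow, mem_singleton_iff.mp h, norm_one] at hnorm
      exact hnorm.false
  have hzero : 0 ∈ S :=
    hS.mem_of_tendsto (tendsto_pow_atTop_nhds_zero_of_norm_lt_one hp) (.of_forall hpow)
  exact union_subset (range_subset_iff.mpr hpow) (singleton_subset_iff.mpr hzero)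

end Contraction

section Spectrum

theorem spectrum_one_sub_mul_comm_sdiff_one {𝕜 A : Type*} [Field 𝕜] [Ring A] [Algebra 𝕜 A]
    (a b : A) : spectrum 𝕜 (1 - a * b) \ {1} = spectrum 𝕜 (1 - b * a) \ {1} := by
  have hone_sub (x : A) : spectrum 𝕜 (1 - x) \ {1} = {1} - spectrum 𝕜 x \ {0} := by
    rw [← map_one (algebraMap 𝕜 A), ← spectrum.singleton_sub_eq]
    simp [singleton_sub, image_sdiff sub_right_injective]
  rw [hone_sub, hone_sub, spectrum.nonzero_mul_comm]

/-- The `p`-deformed oscillator relation between an annihilator `a` and a creator `b`, normalised so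
that it amounts to `1 - ab = p(1 - ba)`. -/
def IsDeformedOscillator {𝕜 A : Type*} [CommRing 𝕜] [Ring A] [Algebra 𝕜 A] (p : 𝕜) (a b : A) :
    Prop :=
  a * b - p • (b * a) = (1 - p) • (1 : A)

namespace IsDeformedOscillator

theorem one_sub_mul_eq_smul {𝕜 A : Type*} [CommRing 𝕜] [Ring A] [Algebra 𝕜 A] {p : 𝕜} {a b : A}
    (h : IsDeformedOscillator p a b) : 1 - a * b = p • (1 - b * a) := by
  rw [sub_eq_iff_eq_add.mp h]
  module

section Field

variable {𝕜 A : Type*} [Field 𝕜] [Ring A] [Algebra 𝕜 A] {p : 𝕜} {a b : A}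

theorem spectrum_sdiff_one (h : IsDeformedOscillator p a b) :
    spectrum 𝕜 (1 - b * a) \ {1} = p • spectrum 𝕜 (1 - b * a) \ {1} := by
  rcases (spectrum 𝕜 (1 - b * a)).eq_empty_or_nonempty with hempty | hne
  · simp only [hempty, smul_set_empty]
  · have : Nontrivial A := by
      by_contra! hA
      simp [spectrum.of_subsingleton] at hne
    rw [← spectrum.smul_eq_smul p _ hne, ← h.one_sub_mul_eq_smul,
      spectrum_one_sub_mul_comm_sdiff_one]

theorem spectrum_subset_union_smul (h : IsDeformedOscillator p a b) :
    spectrum 𝕜 (1 - b * a) ⊆ {1} ∪ p • spectrum 𝕜 (1 - b * a) := by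
  rw [← sdiff_subset_iff, h.spectrum_sdiff_one]
  exact sdiff_subset

end Field

section Banach

variable {𝕜 A : Type*} [NormedField 𝕜] [NormedRing A] [NormedAlgebra 𝕜 A] [CompleteSpace A]
  {p : 𝕜} {a b : A}

theorem spectrum_subset (h : IsDeformedOscillator p a b) (hp : ‖p‖ < 1) :
    spectrum 𝕜 (1 - b * a) ⊆ range (fun k : ℕ ↦ p ^ k) ∪ {0} := by
  simpa using subset_iUnion_pow_smul_union_zero (spectrum.isBounded (1 - b * a)) hp
    h.spectrum_subset_union_smul

theorem spectrum_subset_zero (h : IsDeformedOscillator p a b) (hp : ‖p‖ < 1)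
    (h1 : 1 ∉ spectrum 𝕜 (1 - b * a)) : spectrum 𝕜 (1 - b * a) ⊆ {0} := by
  have hsub : spectrum 𝕜 (1 - b * a) ⊆ ∅ ∪ p • spectrum 𝕜 (1 - b * a) := fun z hz ↦
    .inr <| (h.spectrum_subset_union_smul hz).resolve_left fun hz1 ↦ h1 (hz1 ▸ hz)
  simpa using subset_iUnion_pow_smul_union_zero (spectrum.isBounded (1 - b * a)) hp hsub

theorem spectrum_eq (h : IsDeformedOscillator p a b) (hp : ‖p‖ < 1)
    (h1 : 1 ∈ spectrum 𝕜 (1 - b * a)) :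
    spectrum 𝕜 (1 - b * a) = range (fun k : ℕ ↦ p ^ k) ∪ {0} := by
  have hsmul : p • spectrum 𝕜 (1 - b * a) \ {1} ⊆ spectrum 𝕜 (1 - b * a) :=
    h.spectrum_sdiff_one.symm.subset.trans sdiff_subset
  exact (h.spectrum_subset hp).antisymm
    (range_pow_union_zero_subset (spectrum.isClosed _) hp h1 hsmul)

end Banach

theorem one_mem_spectrum {A : Type*} [CStarAlgebra A] {p : ℂ} {a b : A}
    (h : IsDeformedOscillator p a b) (hp : ‖p‖ < 1) (hnormal : IsStarNormal (1 - b * a))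
    (hne : 1 - b * a ≠ 0) : 1 ∈ spectrum ℂ (1 - b * a) := by
  by_contra h1
  exact hne (CFC.eq_zero_of_spectrum_subset_zero (R := ℂ) _ (h.spectrum_subset_zero hp h1))

end IsDeformedOscillator

end Spectrum

theorem stmt7_general {A : Type*} [CStarAlgebra A] {p : ℂ} (hp : ‖p‖ < 1) {b : A}
    (hrel : star b * b - p • (b * star b) = (1 - p) • (1 : A)) :
    spectrum ℂ (1 - b * star b) ⊆ range (fun k : ℕ ↦ p ^ k) ∪ {0} ∧
      (1 - b * star b ≠ 0 →
        spectrum ℂ (1 - b * star b) = range (fun k : ℕ ↦ p ^ k) ∪ {0}) := by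
  have h : IsDeformedOscillator p (star b) b := hrel
  have hsa : IsSelfAdjoint (1 - b * star b) := .sub (.one A) (.mul_star_self b)
  exact ⟨h.spectrum_subset hp,
    fun hne ↦ h.spectrum_eq hp (h.one_mem_spectrum hp hsa.isStarNormal hne)⟩

open ContinuousLinearMap in
/-- the spectrum of `I − BB*` is contained in `{p^k : k ∈ ℕ} ∪ {0}`, with
equality when `H ≠ {0}` and `I − BB*` is injective. -/
theorem stmt7 {H : Type*} [NormedAddCommGroup H] [InnerProductSpace ℂ H] [CompleteSpace H]
    (p : ℝ) (hp0 : 0 < p) (hp1 : p < 1) (B : H →L[ℂ] H)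
    (hrel : adjoint B * B - (p : ℂ) • (B * adjoint B) = ((1 - p : ℝ) : ℂ) • (1 : H →L[ℂ] H)) :
    spectrum ℂ ((1 : H →L[ℂ] H) - B * adjoint B) ⊆
      {z : ℂ | ∃ k : ℕ, z = ((p ^ k : ℝ) : ℂ)} ∪ {0} ∧
    (Nontrivial H → Function.Injective ⇑((1 : H →L[ℂ] H) - B * adjoint B) →
      spectrum ℂ ((1 : H →L[ℂ] H) - B * adjoint B) =
        {z : ℂ | ∃ k : ℕ, z = ((p ^ k : ℝ) : ℂ)} ∪ {0}) := by
  have hgen := stmt7_general (p := p) (b := B) (by simpa [abs_of_pos hp0]) (by exact_mod_cast hrel)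
  simp only [Complex.ofReal_pow, @eq_comm ℂ _ ((p : ℂ) ^ _)]
  exact hgen.imp_right fun heq _ hinj ↦
    heq fun hzero ↦ LinearMap.ne_zero_of_injective hinj (congrArg toLinearMap hzero)
end

section
/- In O(S³_pq), for μ ∈ ℤ set a_μ := a^{μ} if μ ≥ 0 and a_μ := (a*)^{|μ|} if μ < 0, and define b_ν analogously for ν ∈ ℤ. Then the family { a_μ (1−aa*)^{m} (1−bb*)^{n} b_ν : μ, ν ∈ ℤ, m, n ∈ ℕ, m·n = 0 } is a basis of O(S³_pq) as a ℂ-vector space (it is linearly independent and spans O(S³_pq)). -/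
noncomputable section

namespace S3pq

/-- Free unital ℂ-algebra on the four generators `a, a*, b, b*`. -/
abbrev FA := FreeAlgebra ℂ (Fin 4)

/-- The generator `a`. -/
def Ag : FA := FreeAlgebra.ι ℂ 0
/-- The generator `a' = a*`. -/
def Ag' : FA := FreeAlgebra.ι ℂ 1
/-- The generator `b`. -/
def Bg : FA := FreeAlgebra.ι ℂ 2
/-- The generator `b' = b*`. -/
def Bg' : FA := FreeAlgebra.ι ℂ 3

/-- The defining relations of `O(S³_pq)`:
`a*a = q·aa* + (1−q)·1`, `b*b = p·bb* + (1−p)·1`, `a, a*` commute with `b, b*`,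
and `(1−aa*)(1−bb*) = 0`. -/
inductive Rel (p q : ℝ) : FA → FA → Prop
  | ra : Rel p q (Ag' * Ag) ((q : ℂ) • (Ag * Ag') + ((1 - q : ℝ) : ℂ) • 1)
  | rb : Rel p q (Bg' * Bg) ((p : ℂ) • (Bg * Bg') + ((1 - p : ℝ) : ℂ) • 1)
  | rab : Rel p q (Ag * Bg) (Bg * Ag)
  | rab' : Rel p q (Ag * Bg') (Bg' * Ag)
  | ra'b : Rel p q (Ag' * Bg) (Bg * Ag')
  | ra'b' : Rel p q (Ag' * Bg') (Bg' * Ag')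
  | rkey : Rel p q ((1 - Ag * Ag') * (1 - Bg * Bg')) 0

/-- The coordinate algebra `O(S³_pq)` as the quotient of the free algebra by the two-sided
ideal generated by the relations. -/
abbrev O (p q : ℝ) := RingQuot (Rel p q)

variable (p q : ℝ)

/-- `a ∈ O(S³_pq)`. -/
def a : O p q := RingQuot.mkAlgHom ℂ (Rel p q) Ag
/-- `a* ∈ O(S³_pq)`. -/
def a' : O p q := RingQuot.mkAlgHom ℂ (Rel p q) Ag'
/-- `b ∈ O(S³_pq)`. -/
def b : O p q := RingQuot.mkAlgHom ℂ (Rel p q) Bg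
/-- `b* ∈ O(S³_pq)`. -/
def b' : O p q := RingQuot.mkAlgHom ℂ (Rel p q) Bg'

/-- `a_μ := a^μ` for `μ ≥ 0` and `(a*)^{|μ|}` for `μ < 0`. -/
def apow (μ : ℤ) : O p q := if 0 ≤ μ then a p q ^ μ.toNat else a' p q ^ (-μ).toNat

/-- `b_ν := b^ν` for `ν ≥ 0` and `(b*)^{|ν|}` for `ν < 0`. -/
def bpow (ν : ℤ) : O p q := if 0 ≤ ν then b p q ^ ν.toNat else b' p q ^ (-ν).toNat

/-- The element `a_μ (1−aa*)^m (1−bb*)^n b_ν` of `O(S³_pq)`. -/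
def basisElem (t : ℤ × ℤ × ℕ × ℕ) : O p q :=
  apow p q t.1 * (1 - a p q * a' p q) ^ t.2.2.1 * (1 - b p q * b' p q) ^ t.2.2.2 * bpow p q t.2.1

/-!
Each of the pairs `(a, a*)` and `(b, b*)` satisfies the relation of a quantum disc, so `1 - x x*`
commutes with the powers `x_μ` up to a scalar and the span of the monomials `x_μ (1 - x x*)^m` is
stable under left multiplication by `x` and `x*`. As the two pairs commute, the products of
monomials for `a` with monomials for `b` span the algebra, and those with `m n ≠ 0` vanish.

For linear independence, `O(S³_pq)` is represented on the two components of the equation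
`(1 - a a*) (1 - b b*) = 0`: in (quantum disc) ⊗ (Laurent polynomials), where `b` becomes unitary,
and in (Laurent polynomials) ⊗ (quantum disc), where `a` does. The first representation kills the
elements with `n ≠ 0` and separates those with `n = 0`; the second separates those with `m = 0`.
The quantum disc itself is realised faithfully by weighted shifts.
-/

section SpanMul

variable {R A : Type*} [CommSemiring R] [Semiring A] [Algebra R A]

lemma toSubmodule_adjoin_le {s : Set A} {W : Submodule R A} (one_mem : 1 ∈ W)
    (mul_mem : ∀ y ∈ s, ∀ w ∈ W, y * w ∈ W) :
    Subalgebra.toSubmodule (Algebra.adjoin R s) ≤ W := by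
  have mul_mem_of_adjoin : ∀ y ∈ Algebra.adjoin R s, ∀ w ∈ W, y * w ∈ W := by
    intro y hy
    induction hy using Algebra.adjoin_induction with
    | mem y hy => exact mul_mem y hy
    | algebraMap c =>
      intro w hw
      rw [← Algebra.smul_def]
      exact W.smul_mem c hw
    | add y z _ _ hy hz =>
      intro w hw
      rw [add_mul]
      exact add_mem (hy w hw) (hz w hw)
    | mul y z _ _ hy hz =>
      intro w hw
      rw [mul_assoc]
      exact hy _ (hz w hw)
  intro y hy
  simpa only [mul_one] using mul_mem_of_adjoin y hy 1 one_mem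

lemma mul_mem_mul_of_forall_left {M N : Submodule R A} {y : A} (h : ∀ w ∈ M, y * w ∈ M) {w : A}
    (hw : w ∈ M * N) : y * w ∈ M * N := by
  suffices M * N ≤ (M * N).comap (LinearMap.mulLeft R y) from this hw
  refine Submodule.mul_le.2 fun m hm n hn => ?_
  rw [Submodule.mem_comap, LinearMap.mulLeft_apply, ← mul_assoc]
  exact Submodule.mul_mem_mul (h m hm) hn

lemma mul_mem_mul_of_forall_right {M N : Submodule R A} {y : A} (hcomm : ∀ w ∈ M, Commute y w)
    (h : ∀ w ∈ N, y * w ∈ N) {w : A} (hw : w ∈ M * N) : y * w ∈ M * N := by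
  suffices M * N ≤ (M * N).comap (LinearMap.mulLeft R y) from this hw
  refine Submodule.mul_le.2 fun m hm n hn => ?_
  rw [Submodule.mem_comap, LinearMap.mulLeft_apply, (hcomm m hm).left_comm]
  exact Submodule.mul_mem_mul hm (h n hn)

end SpanMul

section SkewCommute

variable {R A : Type*} [CommSemiring R] [Semiring A] [Algebra R A] {c : R} {y z : A}

lemma pow_mul_eq_smul (h : y * z = c • (z * y)) (n : ℕ) : y ^ n * z = c ^ n • (z * y ^ n) := by
  induction n with
  | zero => simp
  | succ n ih =>
    rw [pow_succ', mul_assoc, ih, mul_smul_comm, ← mul_assoc, h, smul_mul_assoc, smul_smul,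
      mul_assoc, ← pow_succ, ← pow_succ']

lemma mul_pow_eq_smul (h : y * z = c • (z * y)) (n : ℕ) : y * z ^ n = c ^ n • (z ^ n * y) := by
  induction n with
  | zero => simp
  | succ n ih =>
    rw [pow_succ, ← mul_assoc, ih, smul_mul_assoc, mul_assoc, h, mul_smul_comm, smul_smul,
      ← mul_assoc, ← pow_succ]

end SkewCommute

lemma linearIndepOn_union_of_map {R M N ι : Type*} [Ring R] [AddCommGroup M] [Module R M]
    [AddCommGroup N] [Module R N] {v : ι → M} {s t : Set ι} (f : M →ₗ[R] N)
    (hs : LinearIndepOn R v s) (hfs : ∀ i ∈ s, f (v i) = 0) (ht : LinearIndepOn R (f ∘ v) t) :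
    LinearIndepOn R v (s ∪ t) := by
  have hker : Submodule.span R (v '' s) ≤ LinearMap.ker f :=
    Submodule.span_le.2 (Set.image_subset_iff.2 hfs)
  exact hs.union_of_quotient (LinearIndependent.of_comp (Submodule.liftQ _ f hker) ht)

open TensorProduct in
lemma linearIndepOn_tmul {R M N ι κ σ : Type*} [CommSemiring R] [AddCommMonoid M]
    [Module R M] [Module.Flat R M] [AddCommMonoid N] [Module R N] {v : ι → M} {w : κ → N}
    {s : Set σ} {f : σ → ι} {g : σ → κ} (hv : LinearIndependent R v) (hw : LinearIndependent R w)
    (hfg : s.InjOn fun t => (f t, g t)) : LinearIndepOn R (fun t => v (f t) ⊗ₜ[R] w (g t)) s :=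
  (hv.tmul_of_flat_left hw).comp (fun t : s => (f t, g t)) hfg.injective

section SignedPow

variable {M : Type*} [Monoid M] (x x' : M)

/-- The power `x_μ` of the paper: `x ^ μ` for `μ ≥ 0` and `x' ^ |μ|` for `μ < 0`, where `x'` stands
for the adjoint of `x`. It specialises to `apow` and `bpow`. -/
def signedPow (μ : ℤ) : M := if 0 ≤ μ then x ^ μ.toNat else x' ^ (-μ).toNat

@[simp]
lemma signedPow_natCast (k : ℕ) : signedPow x x' k = x ^ k := by simp [signedPow]

@[simp]
lemma signedPow_neg_natCast (k : ℕ) : signedPow x x' (-k) = x' ^ k := by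
  obtain rfl | hk := k.eq_zero_or_pos
  · simp [signedPow]
  · simp [signedPow, hk.ne']

lemma signedPow_zero : signedPow x x' 0 = 1 := by simp [signedPow]

lemma map_signedPow {N F : Type*} [Monoid N] [FunLike F M N] [MonoidHomClass F M N] (φ : F)
    (μ : ℤ) : φ (signedPow x x' μ) = signedPow (φ x) (φ x') μ := by
  rw [signedPow, signedPow, apply_ite φ, map_pow, map_pow]

variable {x x'}

lemma commute_signedPow {y : M} (h : Commute y x) (h' : Commute y x') (μ : ℤ) :
    Commute y (signedPow x x' μ) := by
  rw [signedPow]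
  split_ifs
  · exact h.pow_right _
  · exact h'.pow_right _

end SignedPow

/-- The defining relation `x* x = r x x* + (1 - r)` of the quantum disc with parameter `r`, with
`x'` in the role of `x*`. -/
def IsDiscPair {K A : Type*} [CommRing K] [Ring A] [Algebra K A] (r : K) (x x' : A) : Prop :=
  x' * x = r • (x * x') + (1 - r) • 1

/-- The span of the monomials `x_μ (1 - x x')^m`, which for a disc pair with invertible parameter
is the subalgebra generated by `x` and `x'`. -/
def discSpan (K : Type*) {A : Type*} [CommRing K] [Ring A] [Algebra K A] (x x' : A) :
    Submodule K A :=
  Submodule.span K (Set.range fun t : ℤ × ℕ => signedPow x x' t.1 * (1 - x * x') ^ t.2)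

section DiscSpan

variable {K A : Type*} [CommRing K] [Ring A] [Algebra K A] {x x' : A}

lemma signedPow_mul_pow_mem_discSpan (μ : ℤ) (m : ℕ) :
    signedPow x x' μ * (1 - x * x') ^ m ∈ discSpan K x x' :=
  Submodule.subset_span ⟨(μ, m), rfl⟩

lemma one_mem_discSpan : (1 : A) ∈ discSpan K x x' := by
  simpa only [signedPow_zero, pow_zero, mul_one] using
    signedPow_mul_pow_mem_discSpan (K := K) (x := x) (x' := x') 0 0

lemma commute_of_mem_discSpan {y w : A} (h : Commute y x) (h' : Commute y x')
    (hw : w ∈ discSpan K x x') : Commute y w := by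
  induction hw using Submodule.span_induction with
  | mem w hw =>
    obtain ⟨t, rfl⟩ := hw
    exact (commute_signedPow h h' _).mul_right
      (((Commute.one_right y).sub_right (h.mul_right h')).pow_right _)
  | zero => exact Commute.zero_right y
  | add v w _ _ hv hw => exact hv.add_right hw
  | smul c w _ hw => exact hw.smul_right c

lemma mul_mem_discSpan_of_mul_signedPow {y : A} (f : ℤ → ℤ)
    (h : ∀ μ, ∃ c : K, y * signedPow x x' μ =
      signedPow x x' (f μ) + c • (signedPow x x' (f μ) * (1 - x * x')))
    {w : A} (hw : w ∈ discSpan K x x') : y * w ∈ discSpan K x x' := by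
  suffices discSpan K x x' ≤ (discSpan K x x').comap (LinearMap.mulLeft K y) from this hw
  refine Submodule.span_le.2 (Set.range_subset_iff.2 fun ⟨μ, m⟩ => ?_)
  obtain ⟨c, hc⟩ := h μ
  have expand : y * (signedPow x x' μ * (1 - x * x') ^ m) =
      signedPow x x' (f μ) * (1 - x * x') ^ m +
        c • (signedPow x x' (f μ) * (1 - x * x') ^ (m + 1)) := by
    rw [← mul_assoc, hc, add_mul, smul_mul_assoc, mul_assoc _ (1 - x * x'), ← pow_succ']
  rw [SetLike.mem_coe, Submodule.mem_comap, LinearMap.mulLeft_apply, expand]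
  exact add_mem (signedPow_mul_pow_mem_discSpan _ _)
    (Submodule.smul_mem _ _ (signedPow_mul_pow_mem_discSpan _ _))

end DiscSpan

namespace IsDiscPair

section CommRing

variable {K A : Type*} [CommRing K] [Ring A] [Algebra K A] {r : K} {x x' : A}

lemma of_mul_eq_one (h : x * x' = 1) (h' : x' * x = 1) : IsDiscPair r x x' := by
  rw [IsDiscPair, h, h', ← add_smul, add_sub_cancel, one_smul]

lemma mul_eq_one_sub_smul (h : IsDiscPair r x x') : x' * x = 1 - r • (1 - x * x') := by
  rw [h, sub_smul, one_smul, smul_sub]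
  abel

lemma one_sub_mul_eq_smul (h : IsDiscPair r x x') :
    (1 - x * x') * x = r • (x * (1 - x * x')) := by
  rw [sub_mul, mul_assoc, h.mul_eq_one_sub_smul, mul_sub, mul_one, one_mul, mul_smul_comm,
    sub_sub_cancel]

lemma mul_one_sub_eq_smul (h : IsDiscPair r x x') :
    x' * (1 - x * x') = r • ((1 - x * x') * x') := by
  rw [mul_sub, ← mul_assoc, h.mul_eq_one_sub_smul, sub_mul, mul_one, one_mul, smul_mul_assoc,
    sub_sub_cancel]

lemma conj_mul_signedPow (h : IsDiscPair r x x') (μ : ℤ) :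
    ∃ c : K, x' * signedPow x x' μ =
      signedPow x x' (μ - 1) + c • (signedPow x x' (μ - 1) * (1 - x * x')) := by
  obtain hμ | hμ := le_or_gt μ 0
  · obtain ⟨k, rfl⟩ := Int.exists_eq_neg_ofNat hμ
    refine ⟨0, ?_⟩
    rw [← neg_add', ← Nat.cast_succ, signedPow_neg_natCast, signedPow_neg_natCast, zero_smul,
      add_zero, pow_succ']
  · obtain ⟨k, rfl⟩ : ∃ k : ℕ, μ = (k + 1 : ℕ) := ⟨(μ - 1).toNat, by omega⟩
    refine ⟨-(r * r ^ k), ?_⟩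
    rw [Nat.cast_succ, add_sub_cancel_right, ← Nat.cast_succ, signedPow_natCast, signedPow_natCast,
      neg_smul, mul_smul, ← mul_pow_eq_smul h.one_sub_mul_eq_smul, pow_succ', ← mul_assoc,
      h.mul_eq_one_sub_smul, sub_mul, one_mul, smul_mul_assoc, sub_eq_add_neg]

lemma conj_mul_mem_discSpan (h : IsDiscPair r x x') {w : A} (hw : w ∈ discSpan K x x') :
    x' * w ∈ discSpan K x x' :=
  mul_mem_discSpan_of_mul_signedPow (· - 1) h.conj_mul_signedPow hw

end CommRing

variable {K A : Type*} [Field K] [Ring A] [Algebra K A] {r : K} {x x' : A}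

lemma mul_signedPow (h : IsDiscPair r x x') (hr : r ≠ 0) (μ : ℤ) :
    ∃ c : K, x * signedPow x x' μ =
      signedPow x x' (μ + 1) + c • (signedPow x x' (μ + 1) * (1 - x * x')) := by
  obtain hμ | hμ := le_or_gt 0 μ
  · obtain ⟨k, rfl⟩ := Int.eq_ofNat_of_zero_le hμ
    refine ⟨0, ?_⟩
    rw [← Nat.cast_succ, signedPow_natCast, signedPow_natCast, zero_smul, add_zero, pow_succ']
  · obtain ⟨k, rfl⟩ : ∃ k : ℕ, μ = -(k + 1 : ℕ) := ⟨(-μ - 1).toNat, by omega⟩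
    refine ⟨-(r ^ k)⁻¹, ?_⟩
    rw [signedPow_neg_natCast, Nat.cast_succ, neg_add, neg_add_cancel_right, signedPow_neg_natCast,
      pow_mul_eq_smul h.mul_one_sub_eq_smul, neg_smul, inv_smul_smul₀ (pow_ne_zero k hr), sub_mul,
      one_mul, pow_succ', mul_assoc]
    abel

lemma mul_mem_discSpan (h : IsDiscPair r x x') (hr : r ≠ 0) {w : A} (hw : w ∈ discSpan K x x') :
    x * w ∈ discSpan K x x' :=
  mul_mem_discSpan_of_mul_signedPow (· + 1) (h.mul_signedPow hr) hw

lemma one_sub_mul_signedPow (h : IsDiscPair r x x') (hr : r ≠ 0) (μ : ℤ) :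
    (1 - x * x') * signedPow x x' μ = r ^ μ • (signedPow x x' μ * (1 - x * x')) := by
  obtain ⟨k, rfl | rfl⟩ := μ.eq_nat_or_neg
  · rw [signedPow_natCast, zpow_natCast, mul_pow_eq_smul h.one_sub_mul_eq_smul]
  · rw [signedPow_neg_natCast, zpow_neg, zpow_natCast, pow_mul_eq_smul h.mul_one_sub_eq_smul,
      inv_smul_smul₀ (pow_ne_zero k hr)]

lemma one_sub_pow_mul_signedPow (h : IsDiscPair r x x') (hr : r ≠ 0) (μ : ℤ) (m : ℕ) :
    (1 - x * x') ^ m * signedPow x x' μ = (r ^ μ) ^ m • (signedPow x x' μ * (1 - x * x') ^ m) :=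
  pow_mul_eq_smul (h.one_sub_mul_signedPow hr μ) m

lemma linearIndependent_pow_mul_signedPow (h : IsDiscPair r x x') (hr : r ≠ 0)
    (hli : LinearIndependent K fun t : ℤ × ℕ => signedPow x x' t.1 * (1 - x * x') ^ t.2) :
    LinearIndependent K fun t : ℤ × ℕ => (1 - x * x') ^ t.2 * signedPow x x' t.1 := by
  convert hli.units_smul fun t => (Units.mk0 r hr ^ t.1) ^ t.2 using 1
  funext t
  rw [h.one_sub_pow_mul_signedPow hr]
  simp [Units.smul_def]

end IsDiscPair

section Model

open Polynomial

variable {K : Type*} [Field K]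

/-- The bilateral shift on sequences of polynomials; it represents the generator `x` of the quantum
disc. -/
def shift (K : Type*) [Field K] : Module.End K (ℤ → K[X]) :=
  LinearMap.funLeft K K[X] (· - 1)

/-- The weighted backward shift representing `x*`. The weights are chosen so that `1 - x x*` is
diagonal with entries `r ^ μ X`; the indeterminate `X` keeps its powers linearly independent even
where the numbers `r ^ μ` are not distinct. -/
def weightedBackwardShift (r : K) : Module.End K (ℤ → K[X]) where
  toFun f μ := (1 - C (r ^ (μ + 1)) * X) * f (μ + 1)
  map_add' f g := by
    funext μ
    simp [mul_add]
  map_smul' c f := by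
    funext μ
    simp

lemma shift_apply (f : ℤ → K[X]) (μ : ℤ) : shift K f μ = f (μ - 1) := rfl

lemma weightedBackwardShift_apply (r : K) (f : ℤ → K[X]) (μ : ℤ) :
    weightedBackwardShift r f μ = (1 - C (r ^ (μ + 1)) * X) * f (μ + 1) := rfl

lemma shift_single (μ : ℤ) (f : K[X]) : shift K (Pi.single μ f) = Pi.single (μ + 1) f := by
  funext ν
  simp only [shift_apply, Pi.single_apply, sub_eq_iff_eq_add]

lemma weightedBackwardShift_single (r : K) (μ : ℤ) (f : K[X]) :
    weightedBackwardShift r (Pi.single μ f) = Pi.single (μ - 1) ((1 - C (r ^ μ) * X) * f) := by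
  funext ν
  simp only [weightedBackwardShift_apply, Pi.single_apply, eq_sub_iff_add_eq]
  split_ifs with h
  · rw [h]
  · rw [mul_zero]

lemma one_sub_shift_mul_weightedBackwardShift_apply (r : K) (f : ℤ → K[X]) (μ : ℤ) :
    (1 - shift K * weightedBackwardShift r) f μ = C (r ^ μ) * X * f μ := by
  simp only [LinearMap.sub_apply, Module.End.one_apply, Module.End.mul_apply, Pi.sub_apply,
    shift_apply, weightedBackwardShift_apply, sub_add_cancel]
  ring

lemma isDiscPair_shift {r : K} (hr : r ≠ 0) :
    IsDiscPair r (shift K) (weightedBackwardShift r) := by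
  refine LinearMap.ext fun f => funext fun μ => ?_
  simp only [Module.End.mul_apply, LinearMap.add_apply, LinearMap.smul_apply, Pi.add_apply,
    Pi.smul_apply, shift_apply, weightedBackwardShift_apply, Module.End.one_apply, sub_add_cancel,
    add_sub_cancel_right, smul_eq_C_mul, zpow_add_one₀ hr, C_mul, C_sub, C_1]
  ring

lemma one_sub_pow_single_zero (r : K) (m : ℕ) :
    ((1 - shift K * weightedBackwardShift r) ^ m) (Pi.single 0 1) =
      (Pi.single 0 (X ^ m) : ℤ → K[X]) := by
  funext μ
  induction m with
  | zero => simp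
  | succ m ih =>
    rw [pow_succ', Module.End.mul_apply, one_sub_shift_mul_weightedBackwardShift_apply, ih]
    obtain rfl | hμ := eq_or_ne μ 0
    · simp [pow_succ']
    · simp [hμ]

lemma exists_signedPow_single_zero (r : K) (μ : ℤ) :
    ∃ P : K[X], P ≠ 0 ∧ ∀ f : K[X],
      signedPow (shift K) (weightedBackwardShift r) μ (Pi.single 0 f) = Pi.single μ (P * f) := by
  obtain ⟨k, rfl | rfl⟩ := μ.eq_nat_or_neg
  · refine ⟨1, one_ne_zero, fun f => ?_⟩
    rw [signedPow_natCast, one_mul]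
    induction k with
    | zero => simp
    | succ k ih => rw [pow_succ', Module.End.mul_apply, ih, shift_single, Nat.cast_succ]
  · simp only [signedPow_neg_natCast]
    induction k with
    | zero => exact ⟨1, one_ne_zero, by simp⟩
    | succ k ih =>
      obtain ⟨P, hP, hPf⟩ := ih
      have factor_ne_zero : (1 - C (r ^ (-k : ℤ)) * X : K[X]) ≠ 0 := fun h => by
        simpa using congrArg (eval 0) h
      refine ⟨(1 - C (r ^ (-k : ℤ)) * X) * P, mul_ne_zero factor_ne_zero hP, fun f => ?_⟩
      rw [pow_succ', Module.End.mul_apply, hPf, weightedBackwardShift_single, mul_assoc,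
        Nat.cast_succ, neg_add']

theorem linearIndependent_signedPow_shift_mul_pow (r : K) :
    LinearIndependent K fun t : ℤ × ℕ =>
      signedPow (shift K) (weightedBackwardShift r) t.1 *
        (1 - shift K * weightedBackwardShift r) ^ t.2 := by
  choose P hP hPf using exists_signedPow_single_zero r
  have column (μ : ℤ) : LinearIndependent K fun m : ℕ => P μ * X ^ m := by
    have monomials : LinearIndependent K fun m : ℕ => (X ^ m : K[X]) := by
      simpa [X_pow_eq_monomial] using (basisMonomials K).linearIndependent
    exact monomials.map_injOn (LinearMap.mulLeft K (P μ)) (mul_right_injective₀ (hP μ)).injOn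
  have single : LinearIndependent K fun t : ℤ × ℕ =>
      (Pi.single t.1 (P t.1 * X ^ t.2) : ℤ → K[X]) :=
    (Pi.linearIndependent_single _ column).comp (Equiv.sigmaEquivProd ℤ ℕ).symm
      (Equiv.injective _)
  refine .of_comp (LinearMap.applyₗ (Pi.single 0 1)) ?_
  convert single using 1
  funext t
  simp only [Function.comp_apply, LinearMap.applyₗ_apply_apply, Module.End.mul_apply,
    one_sub_pow_single_zero, hPf]

end Model

section LaurentPolynomial

open LaurentPolynomial

variable {K : Type*} [CommRing K]

lemma T_one_mul_T_neg_one : (T 1 * T (-1) : K[T;T⁻¹]) = 1 := by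
  rw [← T_add, add_neg_cancel, T_zero]

lemma isDiscPair_T (r : K) : IsDiscPair r (T 1 : K[T;T⁻¹]) (T (-1)) :=
  .of_mul_eq_one T_one_mul_T_neg_one (by rw [mul_comm, T_one_mul_T_neg_one])

lemma linearIndependent_signedPow_T :
    LinearIndependent K (signedPow (T 1 : K[T;T⁻¹]) (T (-1))) := by
  convert (AddMonoidAlgebra.basis ℤ K).linearIndependent using 1
  funext ν
  rw [AddMonoidAlgebra.basis_apply, ← T]
  obtain ⟨k, rfl | rfl⟩ := ν.eq_nat_or_neg <;> simp [T_pow]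

end LaurentPolynomial

section Relations

lemma isDiscPair_a : IsDiscPair (q : ℂ) (a p q) (a' p q) := by
  have h := RingQuot.mkAlgHom_rel ℂ (Rel.ra (p := p) (q := q))
  simp only [map_mul, map_add, map_smul, map_one, Complex.ofReal_sub, Complex.ofReal_one] at h
  exact h

lemma isDiscPair_b : IsDiscPair (p : ℂ) (b p q) (b' p q) := by
  have h := RingQuot.mkAlgHom_rel ℂ (Rel.rb (p := p) (q := q))
  simp only [map_mul, map_add, map_smul, map_one, Complex.ofReal_sub, Complex.ofReal_one] at h
  exact h

lemma commute_a_b : Commute (a p q) (b p q) := by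
  have h := RingQuot.mkAlgHom_rel ℂ (Rel.rab (p := p) (q := q))
  rwa [map_mul, map_mul] at h

lemma commute_a_b' : Commute (a p q) (b' p q) := by
  have h := RingQuot.mkAlgHom_rel ℂ (Rel.rab' (p := p) (q := q))
  rwa [map_mul, map_mul] at h

lemma commute_a'_b : Commute (a' p q) (b p q) := by
  have h := RingQuot.mkAlgHom_rel ℂ (Rel.ra'b (p := p) (q := q))
  rwa [map_mul, map_mul] at h

lemma commute_a'_b' : Commute (a' p q) (b' p q) := by
  have h := RingQuot.mkAlgHom_rel ℂ (Rel.ra'b' (p := p) (q := q))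
  rwa [map_mul, map_mul] at h

lemma one_sub_mul_one_sub : (1 - a p q * a' p q) * (1 - b p q * b' p q) = 0 := by
  have h := RingQuot.mkAlgHom_rel ℂ (Rel.rkey (p := p) (q := q))
  simp only [map_mul, map_sub, map_one, map_zero] at h
  exact h

lemma adjoin_generators : Algebra.adjoin ℂ {a p q, a' p q, b p q, b' p q} = ⊤ := by
  have range_generators : Set.range (RingQuot.mkAlgHom ℂ (Rel p q) ∘ FreeAlgebra.ι ℂ) =
      {a p q, a' p q, b p q, b' p q} := by
    ext x
    simp [Fin.exists_fin_succ, a, a', b, b', Ag, Ag', Bg, Bg', eq_comm]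
  rw [← range_generators, Set.range_comp, ← AlgHom.map_adjoin, FreeAlgebra.adjoin_range_ι,
    Algebra.map_top, AlgHom.range_eq_top]
  exact RingQuot.mkAlgHom_surjective ℂ (Rel p q)

lemma basisElem_eq (t : ℤ × ℤ × ℕ × ℕ) :
    basisElem p q t = signedPow (a p q) (a' p q) t.1 * (1 - a p q * a' p q) ^ t.2.2.1 *
      (1 - b p q * b' p q) ^ t.2.2.2 * signedPow (b p q) (b' p q) t.2.1 := rfl

lemma basisElem_eq_zero {t : ℤ × ℤ × ℕ × ℕ} (ht : t.2.2.1 * t.2.2.2 ≠ 0) :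
    basisElem p q t = 0 := by
  obtain ⟨μ, ν, m, n⟩ := t
  obtain ⟨⟨m, rfl⟩, ⟨n, rfl⟩⟩ :=
    (mul_ne_zero_iff.1 ht).imp Nat.exists_eq_succ_of_ne_zero Nat.exists_eq_succ_of_ne_zero
  have pow_mul_pow : (1 - a p q * a' p q) ^ (m + 1) * (1 - b p q * b' p q) ^ (n + 1) = 0 := by
    rw [pow_succ, pow_succ', mul_assoc, ← mul_assoc (1 - a p q * a' p q), one_sub_mul_one_sub,
      zero_mul, mul_zero]
  simp only [basisElem_eq, Nat.succ_eq_add_one]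
  rw [mul_assoc (signedPow _ _ _), pow_mul_pow, mul_zero, zero_mul]

end Relations

section Spanning

variable {p q}

lemma discSpan_mul_discSpan_eq_top (hp : p ≠ 0) (hq : q ≠ 0) :
    discSpan ℂ (a p q) (a' p q) * discSpan ℂ (b p q) (b' p q) = ⊤ := by
  have hp' : (p : ℂ) ≠ 0 := Complex.ofReal_ne_zero.2 hp
  have hq' : (q : ℂ) ≠ 0 := Complex.ofReal_ne_zero.2 hq
  have one_mem : 1 ∈ discSpan ℂ (a p q) (a' p q) * discSpan ℂ (b p q) (b' p q) := by
    simpa using Submodule.mul_mem_mul (one_mem_discSpan (K := ℂ) (x := a p q) (x' := a' p q))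
      (one_mem_discSpan (K := ℂ) (x := b p q) (x' := b' p q))
  rw [eq_top_iff, ← Algebra.top_toSubmodule, ← adjoin_generators]
  refine toSubmodule_adjoin_le one_mem ?_
  rintro y (rfl | rfl | rfl | rfl) w hw
  · exact mul_mem_mul_of_forall_left (fun _ => (isDiscPair_a p q).mul_mem_discSpan hq') hw
  · exact mul_mem_mul_of_forall_left (fun _ => (isDiscPair_a p q).conj_mul_mem_discSpan) hw
  · exact mul_mem_mul_of_forall_right
      (fun _ => commute_of_mem_discSpan (commute_a_b p q).symm (commute_a'_b p q).symm)
      (fun _ => (isDiscPair_b p q).mul_mem_discSpan hp') hw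
  · exact mul_mem_mul_of_forall_right
      (fun _ => commute_of_mem_discSpan (commute_a_b' p q).symm (commute_a'_b' p q).symm)
      (fun _ => (isDiscPair_b p q).conj_mul_mem_discSpan) hw

lemma monomial_mul_monomial_eq_smul_basisElem (hp : p ≠ 0) (μ ν : ℤ) (m n : ℕ) :
    (signedPow (a p q) (a' p q) μ * (1 - a p q * a' p q) ^ m) *
        (signedPow (b p q) (b' p q) ν * (1 - b p q * b' p q) ^ n) =
      (((p : ℂ) ^ ν) ^ n)⁻¹ • basisElem p q (μ, ν, m, n) := by
  have hp' : (p : ℂ) ≠ 0 := Complex.ofReal_ne_zero.2 hp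
  rw [basisElem_eq, mul_assoc _ ((1 - b p q * b' p q) ^ n),
    (isDiscPair_b p q).one_sub_pow_mul_signedPow hp', mul_smul_comm,
    inv_smul_smul₀ (pow_ne_zero _ (zpow_ne_zero _ hp'))]

theorem span_basisElem_eq_top (hp : p ≠ 0) (hq : q ≠ 0) :
    Submodule.span ℂ
      (Set.range (fun t : {x : ℤ × ℤ × ℕ × ℕ // x.2.2.1 * x.2.2.2 = 0} => basisElem p q t.1))
      = ⊤ := by
  rw [eq_top_iff, ← discSpan_mul_discSpan_eq_top hp hq, discSpan, discSpan,
    Submodule.span_mul_span, Submodule.span_le]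
  rintro _ ⟨_, ⟨⟨μ, m⟩, rfl⟩, _, ⟨⟨ν, n⟩, rfl⟩, rfl⟩
  dsimp only
  rw [monomial_mul_monomial_eq_smul_basisElem hp]
  by_cases hmn : m * n = 0
  · exact Submodule.smul_mem _ _ (Submodule.subset_span ⟨⟨(μ, ν, m, n), hmn⟩, rfl⟩)
  · rw [basisElem_eq_zero p q hmn, smul_zero]
    exact zero_mem _

end Spanning

section Independence

open LaurentPolynomial TensorProduct

variable {p q} {A B : Type*} [Ring A] [Algebra ℂ A] [Ring B] [Algebra ℂ B] {x x' : A} {y y' : B}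

/-- The representation `a ↦ x ⊗ 1`, `b ↦ 1 ⊗ y` of `O(S³_pq)` in a tensor product, for disc pairs
`(x, x')` and `(y, y')` such that `(1 - x x') ⊗ (1 - y y') = 0`. -/
def toTensorProduct (hx : IsDiscPair (q : ℂ) x x') (hy : IsDiscPair (p : ℂ) y y')
    (hxy : (1 - x * x') ⊗ₜ[ℂ] (1 - y * y') = 0) : O p q →ₐ[ℂ] A ⊗[ℂ] B :=
  RingQuot.liftAlgHom ℂ ⟨FreeAlgebra.lift ℂ ![x ⊗ₜ 1, x' ⊗ₜ 1, 1 ⊗ₜ y, 1 ⊗ₜ y'], by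
    rintro _ _ (_ | _ | _ | _ | _ | _ | _)
    case rkey =>
      simpa [Ag, Ag', Bg, Bg', Algebra.TensorProduct.one_def, ← TensorProduct.sub_tmul,
        ← TensorProduct.tmul_sub] using hxy
    -- `Complex.coe_smul` would turn the scalars into real ones, out of reach of `map_smul`.
    case ra =>
      rw [IsDiscPair] at hx
      simp [-Complex.coe_smul, Ag, Ag', hx, Algebra.TensorProduct.one_def, TensorProduct.add_tmul,
        TensorProduct.smul_tmul']
    case rb =>
      rw [IsDiscPair] at hy
      simp [-Complex.coe_smul, Bg, Bg', hy, Algebra.TensorProduct.one_def, TensorProduct.tmul_add]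
    all_goals simp [Ag, Ag', Bg, Bg']⟩

section Apply

variable (hx : IsDiscPair (q : ℂ) x x') (hy : IsDiscPair (p : ℂ) y y')
  (hxy : (1 - x * x') ⊗ₜ[ℂ] (1 - y * y') = 0)

lemma toTensorProduct_a : toTensorProduct hx hy hxy (a p q) = x ⊗ₜ 1 := by
  simp [toTensorProduct, a, Ag]

lemma toTensorProduct_a' : toTensorProduct hx hy hxy (a' p q) = x' ⊗ₜ 1 := by
  simp [toTensorProduct, a', Ag']

lemma toTensorProduct_b : toTensorProduct hx hy hxy (b p q) = 1 ⊗ₜ y := by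
  simp [toTensorProduct, b, Bg]

lemma toTensorProduct_b' : toTensorProduct hx hy hxy (b' p q) = 1 ⊗ₜ y' := by
  simp [toTensorProduct, b', Bg']

lemma toTensorProduct_basisElem (t : ℤ × ℤ × ℕ × ℕ) :
    toTensorProduct hx hy hxy (basisElem p q t) =
      (signedPow x x' t.1 * (1 - x * x') ^ t.2.2.1) ⊗ₜ
        ((1 - y * y') ^ t.2.2.2 * signedPow y y' t.2.1) := by
  have left (μ : ℤ) : signedPow (x ⊗ₜ[ℂ] (1 : B)) (x' ⊗ₜ 1) μ = signedPow x x' μ ⊗ₜ 1 :=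
    (map_signedPow x x' (Algebra.TensorProduct.includeLeft : A →ₐ[ℂ] A ⊗[ℂ] B) μ).symm
  have right (ν : ℤ) : signedPow ((1 : A) ⊗ₜ[ℂ] y) (1 ⊗ₜ y') ν = 1 ⊗ₜ signedPow y y' ν :=
    (map_signedPow y y' (Algebra.TensorProduct.includeRight : B →ₐ[ℂ] A ⊗[ℂ] B) ν).symm
  simp only [basisElem_eq, map_mul, map_pow, map_sub, map_one, map_signedPow, toTensorProduct_a,
    toTensorProduct_a', toTensorProduct_b, toTensorProduct_b', left, right,
    Algebra.TensorProduct.one_def, Algebra.TensorProduct.tmul_mul_tmul, mul_one, one_mul,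
    ← TensorProduct.sub_tmul, ← TensorProduct.tmul_sub, Algebra.TensorProduct.tmul_pow, one_pow]

lemma linearIndepOn_toTensorProduct_basisElem_left
    (indep_x : LinearIndependent ℂ fun t : ℤ × ℕ => signedPow x x' t.1 * (1 - x * x') ^ t.2)
    (indep_y : LinearIndependent ℂ (signedPow y y')) :
    LinearIndepOn ℂ (toTensorProduct hx hy hxy ∘ basisElem p q) {t | t.2.2.2 = 0} := by
  have injOn : {t : ℤ × ℤ × ℕ × ℕ | t.2.2.2 = 0}.InjOn fun t => ((t.1, t.2.2.1), t.2.1) := by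
    rintro ⟨μ, ν, m, n⟩ (rfl : n = 0) ⟨μ', ν', m', n'⟩ (rfl : n' = 0) h
    simp_all
  refine (linearIndepOn_tmul indep_x indep_y injOn).congr fun t (ht : t.2.2.2 = 0) => ?_
  simp only [Function.comp_apply, toTensorProduct_basisElem, ht, pow_zero, one_mul]

lemma linearIndepOn_toTensorProduct_basisElem_right
    (indep_x : LinearIndependent ℂ (signedPow x x'))
    (indep_y : LinearIndependent ℂ fun t : ℤ × ℕ => (1 - y * y') ^ t.2 * signedPow y y' t.1) :
    LinearIndepOn ℂ (toTensorProduct hx hy hxy ∘ basisElem p q) {t | t.2.2.1 = 0} := by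
  have injOn : {t : ℤ × ℤ × ℕ × ℕ | t.2.2.1 = 0}.InjOn fun t => (t.1, t.2.1, t.2.2.2) := by
    rintro ⟨μ, ν, m, n⟩ (rfl : m = 0) ⟨μ', ν', m', n'⟩ (rfl : m' = 0) h
    simp_all
  refine (linearIndepOn_tmul indep_x indep_y injOn).congr fun t (ht : t.2.2.1 = 0) => ?_
  simp only [Function.comp_apply, toTensorProduct_basisElem, ht, pow_zero, mul_one]

end Apply

theorem linearIndepOn_basisElem_of_isDiscPair (hp : p ≠ 0) (hx : IsDiscPair (q : ℂ) x x')
    (indep_x : LinearIndependent ℂ fun t : ℤ × ℕ => signedPow x x' t.1 * (1 - x * x') ^ t.2)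
    (hy : IsDiscPair (p : ℂ) y y')
    (indep_y : LinearIndependent ℂ fun t : ℤ × ℕ => signedPow y y' t.1 * (1 - y * y') ^ t.2) :
    LinearIndepOn ℂ (basisElem p q) {t | t.2.2.1 * t.2.2.2 = 0} := by
  have hp' : (p : ℂ) ≠ 0 := Complex.ofReal_ne_zero.2 hp
  have one_sub_T : (1 - T 1 * T (-1) : ℂ[T;T⁻¹]) = 0 := by rw [T_one_mul_T_neg_one, sub_self]
  let repX : O p q →ₐ[ℂ] A ⊗[ℂ] ℂ[T;T⁻¹] :=
    toTensorProduct hx (isDiscPair_T _) (by rw [one_sub_T, TensorProduct.tmul_zero])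
  let repY : O p q →ₐ[ℂ] ℂ[T;T⁻¹] ⊗[ℂ] B :=
    toTensorProduct (isDiscPair_T _) hy (by rw [one_sub_T, TensorProduct.zero_tmul])
  have independent_of_left_eq_zero : LinearIndepOn ℂ (basisElem p q) {t | t.2.2.1 = 0} :=
    LinearIndependent.of_comp repY.toLinearMap
      (linearIndepOn_toTensorProduct_basisElem_right _ _ _ linearIndependent_signedPow_T
        (hy.linearIndependent_pow_mul_signedPow hp' indep_y))
  have repX_basisElem : ∀ t ∈ {t : ℤ × ℤ × ℕ × ℕ | t.2.2.1 = 0 ∧ t.2.2.2 ≠ 0},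
      repX (basisElem p q t) = 0 := fun t ht => by
    rw [toTensorProduct_basisElem, one_sub_T, zero_pow ht.2, zero_mul, TensorProduct.tmul_zero]
  refine (linearIndepOn_union_of_map repX.toLinearMap
    (independent_of_left_eq_zero.mono fun _ ht => ht.1) repX_basisElem
    (linearIndepOn_toTensorProduct_basisElem_left _ _ _ indep_x
      linearIndependent_signedPow_T)).mono fun t ht => ?_
  obtain hn | hn := eq_or_ne t.2.2.2 0
  · exact .inr hn
  · exact .inl ⟨(mul_eq_zero.1 ht).resolve_right hn, hn⟩

theorem linearIndepOn_basisElem (hp : p ≠ 0) (hq : q ≠ 0) :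
    LinearIndepOn ℂ (basisElem p q) {t | t.2.2.1 * t.2.2.2 = 0} :=
  linearIndepOn_basisElem_of_isDiscPair hp
    (isDiscPair_shift (Complex.ofReal_ne_zero.2 hq)) (linearIndependent_signedPow_shift_mul_pow _)
    (isDiscPair_shift (Complex.ofReal_ne_zero.2 hp)) (linearIndependent_signedPow_shift_mul_pow _)

end Independence

theorem stmt9_general (hp : p ≠ 0) (hq : q ≠ 0) :
    LinearIndependent ℂ
      (fun t : {x : ℤ × ℤ × ℕ × ℕ // x.2.2.1 * x.2.2.2 = 0} => basisElem p q t.1) ∧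
    Submodule.span ℂ
      (Set.range (fun t : {x : ℤ × ℤ × ℕ × ℕ // x.2.2.1 * x.2.2.2 = 0} => basisElem p q t.1))
      = ⊤ :=
  ⟨linearIndepOn_basisElem hp hq, span_basisElem_eq_top hp hq⟩

/-- the family `{a_μ (1−aa*)^m (1−bb*)^n b_ν : μ,ν ∈ ℤ, m,n ∈ ℕ, mn = 0}`
is a vector space basis of `O(S³_pq)` over ℂ: it is linearly independent and spans. -/
theorem stmt9 (hp0 : 0 < p) (hp1 : p < 1) (hq0 : 0 < q) (hq1 : q < 1) :
    LinearIndependent ℂ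
      (fun t : {x : ℤ × ℤ × ℕ × ℕ // x.2.2.1 * x.2.2.2 = 0} => basisElem p q t.1) ∧
    Submodule.span ℂ
      (Set.range (fun t : {x : ℤ × ℤ × ℕ × ℕ // x.2.2.1 * x.2.2.2 = 0} => basisElem p q t.1))
      = ⊤ :=
  stmt9_general p q hp0.ne' hq0.ne'

end S3pq
end
end

section
/- Let A be a unital C*-algebra, let 0 < q < 1, and let a ∈ A satisfy a*a − q·aa* = (1−q)·1. Then a*a ≥ (1−q)·1 in the order of self-adjoint elements; in particular a*a is invertible, |a| := (a*a)^{1/2} is invertible, and s := a·|a|^{−1} is an isometry, i.e. s*s = 1. -/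
/-!
The relation says `a⋆a = (1 - q) + q aa⋆`, and `q aa⋆` is positive, so `a⋆a` dominates the positive
scalar `1 - q`. Its spectrum therefore stays away from `0`, so `a⋆a` and `|a| = (a⋆a)^{1/2}` are
invertible, and `(a|a|⁻¹)⋆(a|a|⁻¹) = |a|⁻¹|a|²|a|⁻¹ = 1`.
-/

theorem star_mul_self_sub_smul_mul_star_self_le {R A : Type*} [Zero R] [Preorder R]
    [NonUnitalRing A] [PartialOrder A] [StarRing A] [StarOrderedRing A] [SMulWithZero R A]
    [PosSMulMono R A] {q : R} (hq : 0 ≤ q) (a : A) :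
    star a * a - q • (a * star a) ≤ star a * a :=
  sub_le_self _ (smul_nonneg hq (mul_star_self_nonneg a))

theorem isUnit_of_algebraMap_le {R A : Type*} [CommRing R] [PartialOrder R] [IsOrderedAddMonoid R]
    [Ring A] [PartialOrder A] [IsOrderedAddMonoid A] [Algebra R A] [NonnegSpectrumClass R A]
    {r : R} (hr : 0 < r) {x : A} (hx : algebraMap R A r ≤ x) : IsUnit x := by
  have neg_notMem : -r ∉ spectrum R (x - algebraMap R A r) := fun h ↦
    (neg_neg_of_pos hr).not_ge (spectrum_nonneg_of_nonneg (sub_nonneg.2 hx) h)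
  simpa only [spectrum.notMem_iff, map_neg, neg_sub_left, sub_add_cancel, IsUnit.neg_iff]
    using neg_notMem

theorem star_mul_ringInverse_mul_self_eq_one {A : Type*} [Semiring A] [StarRing A] {a b : A}
    (hsa : IsSelfAdjoint b) (hb : IsUnit b) (hab : b * b = star a * a) :
    star (a * Ring.inverse b) * (a * Ring.inverse b) = 1 :=
  calc star (a * Ring.inverse b) * (a * Ring.inverse b)
      = Ring.inverse b * (star a * a) * Ring.inverse b := by
        simp only [star_mul, hsa.ringInverse.star_eq, mul_assoc]
    _ = (Ring.inverse b * b) * (b * Ring.inverse b) := by simp only [← hab, mul_assoc]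
    _ = 1 := by rw [Ring.inverse_mul_cancel b hb, Ring.mul_inverse_cancel b hb, one_mul]

theorem stmt10_general {A : Type*} [Ring A] [StarRing A] [TopologicalSpace A]
    [IsSemitopologicalRing A] [T2Space A] [PartialOrder A] [StarOrderedRing A]
    [Algebra ℝ A] [StarModule ℝ A] [ContinuousFunctionalCalculus ℝ A IsSelfAdjoint]
    [NonnegSpectrumClass ℝ A] {q : ℝ} (hq0 : 0 ≤ q) (hq1 : q < 1) {a : A}
    (hrel : star a * a - q • (a * star a) = (1 - q) • (1 : A)) :
    (1 - q) • (1 : A) ≤ star a * a ∧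
    IsUnit (star a * a) ∧
    IsUnit (CFC.sqrt (star a * a)) ∧
    star (a * Ring.inverse (CFC.sqrt (star a * a))) * (a * Ring.inverse (CFC.sqrt (star a * a)))
      = 1 := by
  have scalar_le : (1 - q) • (1 : A) ≤ star a * a :=
    hrel.ge.trans (star_mul_self_sub_smul_mul_star_self_le hq0 a)
  have isUnit_sq : IsUnit (star a * a) :=
    isUnit_of_algebraMap_le (sub_pos.2 hq1) (by rwa [Algebra.algebraMap_eq_smul_one])
  have isUnit_abs : IsUnit (CFC.sqrt (star a * a)) :=
    (CFC.isUnit_sqrt_iff _ (star_mul_self_nonneg a)).2 isUnit_sq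
  exact ⟨scalar_le, isUnit_sq, isUnit_abs,
    star_mul_ringInverse_mul_self_eq_one (CFC.sqrt_nonneg _).isSelfAdjoint isUnit_abs
      (CFC.sqrt_mul_sqrt_self _ (star_mul_self_nonneg a))⟩

/-- in a unital C*-algebra, if `a*a − q·aa* = (1−q)·1` with `0 < q < 1`, then
`a*a ≥ (1−q)·1`, `a*a` and `|a| = (a*a)^{1/2}` are invertible, and `a·|a|⁻¹` is an isometry. -/
theorem stmt10 {A : Type*} [CStarAlgebra A] [PartialOrder A] [StarOrderedRing A]
    (q : ℝ) (hq0 : 0 < q) (hq1 : q < 1) (a : A)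
    (hrel : star a * a - (q : ℂ) • (a * star a) = ((1 - q : ℝ) : ℂ) • (1 : A)) :
    ((1 - q : ℝ) : ℂ) • (1 : A) ≤ star a * a ∧
    IsUnit (star a * a) ∧
    IsUnit (CFC.sqrt (star a * a)) ∧
    star (a * Ring.inverse (CFC.sqrt (star a * a))) * (a * Ring.inverse (CFC.sqrt (star a * a)))
      = 1 := by
  simp only [Complex.coe_smul] at hrel ⊢
  exact stmt10_general hq0.le hq1 hrel
end

section
/- Let R be a unital ℂ-algebra and let a, a', b, b' ∈ R satisfy: a'a − q·aa' = (1−q)·1, b'b − p·bb' = (1−p)·1, each of a, a' commutes with each of b, b', and (1−aa')(1−bb') = 0, where 0 < p,q < 1. Then for every integer n ≥ 1: Σ_{k=0}^{n} [n choose k]_q · q^{n−k} · (1−aa')^{n−k} (a')^{k} b^{n−k} a^{k} (b')^{n−k} = 1, and symmetrically Σ_{k=0}^{n} [n choose k]_p · p^{n−k} · (1−bb')^{n−k} (b')^{k} a^{n−k} b^{k} (a')^{n−k} = 1. (In particular, for n = 1: a'a + q·bb' − q·aa'bb' = 1 and b'b + p·aa' − p·aa'bb' = 1.) -/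
/-- The Gaussian (q-)binomial coefficient
`[n choose k]_q = ((q−1)⋯(qⁿ−1)) / (((q−1)⋯(q^k−1))·((q−1)⋯(q^{n−k}−1)))`. -/
noncomputable def gbinom (q : ℝ) (n k : ℕ) : ℝ :=
  (∏ i ∈ Finset.range n, (q ^ (i + 1) - 1)) /
    ((∏ i ∈ Finset.range k, (q ^ (i + 1) - 1)) * (∏ i ∈ Finset.range (n - k), (q ^ (i + 1) - 1)))

/-!
Put `x = 1 - a a'`. The relation between `a` and `a'` gives `a' a = 1 - q x` and `a' x = q x a'`,
so `w k = a' ^ k a ^ k` satisfies `w (k + 1) = w k - q ^ (k + 1) x w k`. Together with Pascal's rule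
for the Gaussian binomials this makes `∑ k ≤ n, [n choose k] (q x) ^ (n - k) w k` independent of
`n`, hence equal to `w 0 = 1`. The factors `b ^ (n - k)` and `b' ^ (n - k)` can be inserted freely,
since `x` absorbs `b b'` and commutes with `b`.
-/

open Finset

section GaussBinom

variable {K : Type*} [CommSemiring K]

/-- The Gaussian binomial coefficient at an arbitrary element `q` of a commutative semiring.
Pascal's rule is used as the definition, so that roots of unity need not be excluded. -/
def gaussBinom (q : K) : ℕ → ℕ → K
  | _, 0 => 1
  | 0, _ + 1 => 0
  | n + 1, k + 1 => gaussBinom q n k + q ^ (k + 1) * gaussBinom q n (k + 1)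

@[simp]
lemma gaussBinom_zero_right (q : K) (n : ℕ) : gaussBinom q n 0 = 1 := by
  cases n <;> rfl

lemma gaussBinom_succ_succ (q : K) (n k : ℕ) :
    gaussBinom q (n + 1) (k + 1) = gaussBinom q n k + q ^ (k + 1) * gaussBinom q n (k + 1) :=
  rfl

lemma gaussBinom_eq_zero_of_lt (q : K) {n k : ℕ} (h : n < k) : gaussBinom q n k = 0 := by
  induction n generalizing k with
  | zero => obtain ⟨k, rfl⟩ := Nat.exists_eq_succ_of_ne_zero h.ne'; rfl
  | succ n ih =>
    obtain ⟨k, rfl⟩ := Nat.exists_eq_succ_of_ne_zero (Nat.ne_zero_of_lt h)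
    rw [gaussBinom_succ_succ, ih (by lia), ih (by lia), mul_zero, add_zero]

@[simp]
lemma gaussBinom_self (q : K) (n : ℕ) : gaussBinom q n n = 1 := by
  induction n with
  | zero => rfl
  | succ n ih =>
    rw [gaussBinom_succ_succ, ih, gaussBinom_eq_zero_of_lt q n.lt_succ_self, mul_zero, add_zero]

lemma map_gaussBinom {L : Type*} [CommSemiring L] (f : K →+* L) (q : K) (n k : ℕ) :
    f (gaussBinom q n k) = gaussBinom (f q) n k := by
  induction n generalizing k with
  | zero => cases k <;> simp [gaussBinom]
  | succ n ih => cases k <;> simp [gaussBinom_succ_succ, ih]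

theorem sum_gaussBinom_smul_pow_smul_eq {R M : Type*} [Semiring R] [Algebra K R] [AddCommMonoid M]
    [Module K M] [Module R M] [IsScalarTower K R M] (q : K) (y : R) (w : ℕ → M)
    (hw : ∀ k, w (k + 1) + q ^ k • y • w k = w k) (n : ℕ) :
    ∑ k ∈ range (n + 1), gaussBinom q n k • y ^ (n - k) • w k = w 0 := by
  induction n with
  | zero => simp
  | succ n ih =>
    have shift : (∑ k ∈ range (n + 1), (q ^ (k + 1) * gaussBinom q n (k + 1)) •
          y ^ (n - k) • w (k + 1)) + y ^ (n + 1) • w 0 =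
        ∑ k ∈ range (n + 1), (q ^ k * gaussBinom q n k) • y ^ (n + 1 - k) • w k := by
      have h := sum_range_succ' (fun k ↦ (q ^ k * gaussBinom q n k) • y ^ (n + 1 - k) • w k) (n + 1)
      rw [sum_range_succ, gaussBinom_eq_zero_of_lt q n.lt_succ_self, mul_zero, zero_smul,
        add_zero] at h
      simpa using h.symm
    have combine (k : ℕ) (hk : k ∈ range (n + 1)) :
        gaussBinom q n k • y ^ (n - k) • w (k + 1) +
          (q ^ k * gaussBinom q n k) • y ^ (n + 1 - k) • w k =
        gaussBinom q n k • y ^ (n - k) • w k := by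
      have : SMulCommClass R K M := IsScalarTower.to_smulCommClass'
      rw [Nat.succ_sub (mem_range_succ_iff.1 hk), pow_succ, mul_smul (y ^ (n - k)), mul_comm,
        mul_smul, smul_comm (q ^ k), ← smul_add, ← smul_add, hw]
    rw [sum_range_succ']
    simp only [gaussBinom_succ_succ, Nat.add_sub_add_right, add_smul, sum_add_distrib,
      gaussBinom_zero_right, one_smul, Nat.sub_zero]
    rw [add_assoc, shift, ← sum_add_distrib, sum_congr rfl combine, ih]

end GaussBinom

lemma gaussBinom_mul_prod_mul_prod {K : Type*} [CommRing K] (q : K) (k m : ℕ) :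
    gaussBinom q (k + m) k *
        ((∏ i ∈ range k, (q ^ (i + 1) - 1)) * ∏ i ∈ range m, (q ^ (i + 1) - 1)) =
      ∏ i ∈ range (k + m), (q ^ (i + 1) - 1) := by
  induction k generalizing m with
  | zero => simp
  | succ k ihk =>
    induction m with
    | zero => simp
    | succ m ihm =>
      have h₁ := ihk (m + 1)
      rw [← add_assoc, prod_range_succ _ m] at h₁
      rw [Nat.add_right_comm, prod_range_succ _ k] at ihm
      rw [← add_assoc, Nat.add_right_comm k 1 m, gaussBinom_succ_succ, prod_range_succ _ k,
        prod_range_succ _ m, prod_range_succ _ (k + m + 1)]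
      linear_combination (q ^ (k + 1) - 1) * h₁ + q ^ (k + 1) * (q ^ (m + 1) - 1) * ihm

lemma gbinom_eq_gaussBinom {q : ℝ} (hq : ∀ i, q ^ (i + 1) ≠ 1) {n k : ℕ} (hk : k ≤ n) :
    gbinom q n k = gaussBinom q n k := by
  have prod_ne_zero (m : ℕ) : ∏ i ∈ range m, (q ^ (i + 1) - 1) ≠ 0 :=
    prod_ne_zero_iff.2 fun i _ ↦ sub_ne_zero.2 (hq i)
  obtain ⟨m, rfl⟩ := Nat.exists_eq_add_of_le hk
  rw [gbinom, Nat.add_sub_cancel_left, ← gaussBinom_mul_prod_mul_prod,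
    mul_div_cancel_right₀ _ (mul_ne_zero (prod_ne_zero k) (prod_ne_zero m))]

lemma sum_gbinom_smul_eq_sum_gaussBinom_smul {M : Type*} [AddCommMonoid M] [Module ℂ M] {q : ℝ}
    (hq : ∀ i, q ^ (i + 1) ≠ 1) (n : ℕ) (f : ℕ → M) :
    ∑ k ∈ range (n + 1), ((gbinom q n k * q ^ (n - k) : ℝ) : ℂ) • f k =
      ∑ k ∈ range (n + 1), (gaussBinom (q : ℂ) n k * (q : ℂ) ^ (n - k)) • f k := by
  refine sum_congr rfl fun k hk ↦ ?_
  rw [gbinom_eq_gaussBinom hq (mem_range_succ_iff.1 hk), Complex.ofReal_mul, Complex.ofReal_pow,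
    ← Complex.ofRealHom_eq_coe, map_gaussBinom, Complex.ofRealHom_eq_coe]

lemma pow_mul_eq_pow_smul_mul_pow {K R : Type*} [CommSemiring K] [Semiring R] [Algebra K R] {q : K}
    {x y : R} (h : y * x = q • (x * y)) (k : ℕ) : y ^ k * x = q ^ k • (x * y ^ k) := by
  induction k with
  | zero => simp
  | succ k ih =>
    rw [pow_succ', mul_assoc, ih, mul_smul_comm, ← mul_assoc, h, smul_mul_assoc, smul_smul,
      ← pow_succ, mul_assoc]

lemma pow_mul_pow_mul_pow_eq_pow {M : Type*} [Monoid M] {x b b' : M} (hxb : Commute x b)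
    (h : x * (b * b') = x) (m : ℕ) : x ^ m * (b ^ m * b' ^ m) = x ^ m := by
  induction m with
  | zero => simp
  | succ m ih =>
    calc x ^ (m + 1) * (b ^ (m + 1) * b' ^ (m + 1))
        = x ^ m * (x * b ^ m) * (b * b') * b' ^ m := by
          simp only [pow_succ x, pow_succ b, pow_succ' b', mul_assoc]
      _ = x ^ m * b ^ m * (x * (b * b')) * b' ^ m := by
          simp only [(hxb.pow_right m).eq, mul_assoc]
      _ = x * (x ^ m * (b ^ m * b' ^ m)) := by
          rw [h, mul_assoc (x ^ m), ← (hxb.pow_right m).eq, ← mul_assoc (x ^ m), ← pow_succ,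
            pow_succ', mul_assoc, mul_assoc]
      _ = x ^ (m + 1) := by rw [ih, pow_succ']

section QuantumDisc

variable {K R : Type*} [CommRing K] [Ring R] [Algebra K R] {q : K} {a a' b b' : R}

/-- The defining relation of the quantum disc, with `a'` in the role of the adjoint of `a`.
Both generators of `O(S³_pq)` form such a pair with their adjoints, with parameters `q` and `p`. -/
def IsQuantumDiscPair (q : K) (a a' : R) : Prop :=
  a' * a - q • (a * a') = (1 - q) • (1 : R)

namespace IsQuantumDiscPair

lemma mul_eq_one_sub_smul (h : IsQuantumDiscPair q a a') : a' * a = 1 - q • (1 - a * a') := by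
  rw [sub_eq_iff_eq_add.1 h]
  module

lemma mul_one_sub_mul (h : IsQuantumDiscPair q a a') :
    a' * (1 - a * a') = q • ((1 - a * a') * a') := by
  calc a' * (1 - a * a') = (1 - a' * a) * a' := by noncomm_ring
    _ = q • ((1 - a * a') * a') := by rw [h.mul_eq_one_sub_smul, sub_sub_cancel, smul_mul_assoc]

lemma pow_succ_mul_pow_succ (h : IsQuantumDiscPair q a a') (k : ℕ) :
    a' ^ (k + 1) * a ^ (k + 1) =
      a' ^ k * a ^ k - q ^ (k + 1) • ((1 - a * a') * (a' ^ k * a ^ k)) := by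
  calc a' ^ (k + 1) * a ^ (k + 1) = a' ^ k * (a' * a) * a ^ k := by
        simp only [pow_succ a', pow_succ' a, mul_assoc]
    _ = a' ^ k * a ^ k - q • (a' ^ k * (1 - a * a') * a ^ k) := by
        rw [h.mul_eq_one_sub_smul, mul_sub, mul_one, sub_mul, mul_smul_comm, smul_mul_assoc]
    _ = a' ^ k * a ^ k - q ^ (k + 1) • ((1 - a * a') * (a' ^ k * a ^ k)) := by
        rw [pow_mul_eq_pow_smul_mul_pow h.mul_one_sub_mul, smul_mul_assoc, smul_smul, ← pow_succ',
          mul_assoc]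

lemma mul_add_smul_sub_smul_eq_one (h : IsQuantumDiscPair q a a')
    (hkey : (1 - a * a') * (1 - b * b') = 0) :
    a' * a + q • (b * b') - q • (a * a' * (b * b')) = 1 := by
  calc a' * a + q • (b * b') - q • (a * a' * (b * b'))
      = 1 - q • ((1 - a * a') * (1 - b * b')) := by
        rw [h.mul_eq_one_sub_smul]
        simp only [mul_sub, sub_mul, mul_one, one_mul, smul_sub]
        abel
    _ = 1 := by rw [hkey, smul_zero, sub_zero]

theorem sum_gaussBinom_smul_pow_mul_pow_eq_one (h : IsQuantumDiscPair q a a') (n : ℕ) :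
    ∑ k ∈ range (n + 1), (gaussBinom q n k * q ^ (n - k)) •
      ((1 - a * a') ^ (n - k) * (a' ^ k * a ^ k)) = 1 := by
  have hw (k : ℕ) : a' ^ (k + 1) * a ^ (k + 1) +
      q ^ k • (q • (1 - a * a')) • (a' ^ k * a ^ k) = a' ^ k * a ^ k := by
    rw [h.pow_succ_mul_pow_succ, smul_eq_mul, smul_mul_assoc, smul_smul, ← pow_succ, sub_add_cancel]
  simpa [smul_pow, mul_smul] using
    sum_gaussBinom_smul_pow_smul_eq q (q • (1 - a * a')) (fun k ↦ a' ^ k * a ^ k) hw n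

theorem sum_gaussBinom_smul_eq_one (h : IsQuantumDiscPair q a a') (hab : Commute a b)
    (hab' : Commute a b') (ha'b : Commute a' b) (ha'b' : Commute a' b')
    (hkey : (1 - a * a') * (1 - b * b') = 0) (n : ℕ) :
    ∑ k ∈ range (n + 1), (gaussBinom q n k * q ^ (n - k)) •
      ((1 - a * a') ^ (n - k) * a' ^ k * b ^ (n - k) * a ^ k * b' ^ (n - k)) = 1 := by
  have hxb : Commute (1 - a * a') b := (Commute.one_left b).sub_left (hab.mul_left ha'b)
  have hxbb' : (1 - a * a') * (b * b') = 1 - a * a' := by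
    rwa [mul_sub, mul_one, sub_eq_zero, eq_comm] at hkey
  have term_eq (m k : ℕ) : (1 - a * a') ^ m * a' ^ k * b ^ m * a ^ k * b' ^ m =
      (1 - a * a') ^ m * (a' ^ k * a ^ k) := by
    have hbb' : Commute (a' ^ k * a ^ k) (b ^ m * b' ^ m) :=
      ((ha'b.pow_pow k m).mul_right (ha'b'.pow_pow k m)).mul_left
        ((hab.pow_pow k m).mul_right (hab'.pow_pow k m))
    calc (1 - a * a') ^ m * a' ^ k * b ^ m * a ^ k * b' ^ m
        = (1 - a * a') ^ m * a' ^ k * (b ^ m * a ^ k) * b' ^ m := by simp only [mul_assoc]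
      _ = (1 - a * a') ^ m * (a' ^ k * a ^ k * (b ^ m * b' ^ m)) := by
          rw [← (hab.pow_pow k m).eq]; simp only [mul_assoc]
      _ = (1 - a * a') ^ m * (a' ^ k * a ^ k) := by
          rw [hbb'.eq, ← mul_assoc, pow_mul_pow_mul_pow_eq_pow hxb hxbb']
  simpa only [term_eq] using h.sum_gaussBinom_smul_pow_mul_pow_eq_one n

end IsQuantumDiscPair

end QuantumDisc

theorem stmt11_general {K R : Type*} [CommRing K] [Ring R] [Algebra K R] (p q : K)
    (a a' b b' : R)
    (ha : a' * a - q • (a * a') = (1 - q) • (1 : R))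
    (hb : b' * b - p • (b * b') = (1 - p) • (1 : R))
    (hab : a * b = b * a) (hab' : a * b' = b' * a)
    (ha'b : a' * b = b * a') (ha'b' : a' * b' = b' * a')
    (hkey : (1 - a * a') * (1 - b * b') = 0) :
    (∀ n : ℕ, ∑ k ∈ range (n + 1), (gaussBinom q n k * q ^ (n - k)) •
      ((1 - a * a') ^ (n - k) * a' ^ k * b ^ (n - k) * a ^ k * b' ^ (n - k)) = 1) ∧
    (∀ n : ℕ, ∑ k ∈ range (n + 1), (gaussBinom p n k * p ^ (n - k)) •
      ((1 - b * b') ^ (n - k) * b' ^ k * a ^ (n - k) * b ^ k * a' ^ (n - k)) = 1) ∧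
    a' * a + q • (b * b') - q • (a * a' * (b * b')) = 1 ∧
    b' * b + p • (a * a') - p • (a * a' * (b * b')) = 1 := by
  have hcomm : Commute (a * a') (b * b') :=
    (Commute.mul_right hab hab').mul_left (Commute.mul_right ha'b ha'b')
  have hkey' : (1 - b * b') * (1 - a * a') = 0 := by
    have : Commute (1 - b * b') (1 - a * a') :=
      (Commute.one_left _).sub_left ((Commute.one_right _).sub_right hcomm.symm)
    rwa [this.eq]
  exact ⟨IsQuantumDiscPair.sum_gaussBinom_smul_eq_one ha hab hab' ha'b ha'b' hkey,
    IsQuantumDiscPair.sum_gaussBinom_smul_eq_one hb hab.symm ha'b.symm hab'.symm ha'b'.symm hkey',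
    IsQuantumDiscPair.mul_add_smul_sub_smul_eq_one ha hkey,
    hcomm.eq ▸ IsQuantumDiscPair.mul_add_smul_sub_smul_eq_one hb hkey'⟩

/-- the strong-connection partition-of-unity identities in any unital ℂ-algebra
with elements `a, a', b, b'` satisfying the `S³_pq` relations. -/
theorem stmt11 {R : Type*} [Ring R] [Algebra ℂ R] (p q : ℝ)
    (hp0 : 0 < p) (hp1 : p < 1) (hq0 : 0 < q) (hq1 : q < 1)
    (a a' b b' : R)
    (ha : a' * a - (q : ℂ) • (a * a') = ((1 - q : ℝ) : ℂ) • (1 : R))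
    (hb : b' * b - (p : ℂ) • (b * b') = ((1 - p : ℝ) : ℂ) • (1 : R))
    (hab : a * b = b * a) (hab' : a * b' = b' * a)
    (ha'b : a' * b = b * a') (ha'b' : a' * b' = b' * a')
    (hkey : (1 - a * a') * (1 - b * b') = 0) :
    (∀ n : ℕ, 1 ≤ n →
      ∑ k ∈ Finset.range (n + 1), ((gbinom q n k * q ^ (n - k) : ℝ) : ℂ) •
        ((1 - a * a') ^ (n - k) * a' ^ k * b ^ (n - k) * a ^ k * b' ^ (n - k)) = 1) ∧
    (∀ n : ℕ, 1 ≤ n →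
      ∑ k ∈ Finset.range (n + 1), ((gbinom p n k * p ^ (n - k) : ℝ) : ℂ) •
        ((1 - b * b') ^ (n - k) * b' ^ k * a ^ (n - k) * b ^ k * a' ^ (n - k)) = 1) ∧
    a' * a + (q : ℂ) • (b * b') - (q : ℂ) • (a * a' * (b * b')) = 1 ∧
    b' * b + (p : ℂ) • (a * a') - (p : ℂ) • (a * a' * (b * b')) = 1 := by
  have hq (i : ℕ) : q ^ (i + 1) ≠ 1 := (pow_lt_one₀ hq0.le hq1 i.succ_ne_zero).ne
  have hp (i : ℕ) : p ^ (i + 1) ≠ 1 := (pow_lt_one₀ hp0.le hp1 i.succ_ne_zero).ne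
  simp only [sum_gbinom_smul_eq_sum_gaussBinom_smul hq, sum_gbinom_smul_eq_sum_gaussBinom_smul hp]
  have ⟨hsum_a, hsum_b, hone⟩ := stmt11_general (p : ℂ) q a a' b b' (by simpa using ha)
    (by simpa using hb) hab hab' ha'b ha'b' hkey
  exact ⟨fun n _ ↦ hsum_a n, fun n _ ↦ hsum_b n, hone⟩
end

section
/- Let 0 < p < 1 and 0 < q < 1, and let (e_k)_{k≥0} be the standard orthonormal basis of ℓ²(ℕ). Define bounded operators on ℓ²(ℕ): F₀⁽¹⁾e_k = (1−p^{k})e_k, F₁⁽¹⁾e_k = √(1−p^{k+1})e_{k+1}, F₀⁽²⁾e_k = e_k, F₁⁽²⁾e_k = √(1−q^{k+1})e_{k+1}. For i = 1, 2 set T⁽ⁱ⁾ := q·I + (1−q)·( I − F₀⁽ⁱ⁾ + F₁⁽ⁱ⁾(F₁⁽ⁱ⁾)* ). Then T⁽²⁾ − T⁽¹⁾ is a trace-class operator and Tr(T⁽²⁾ − T⁽¹⁾) = −1. (Equivalently: ρ₁(f₀) − ρ₁(f₁)ρ₁(f₁)* = 0, ρ₂(f₀) − ρ₂(f₁)ρ₂(f₁)*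 is the diagonal operator e_k ↦ q^{k}e_k with trace 1/(1−q), and the Chern–Connes pairing of the trace tr(f) = Tr(ρ₂(f) − ρ₁(f)) on O(S²_pq) with the idempotent E₋₁ equals −1.) -/
open ContinuousLinearMap
open scoped InnerProductSpace

/-!
For a weighted shift `F₁`, the operator `F₁F₁*` is diagonal, with `0` followed by the squared
moduli of the weights on the diagonal. For the weights `√(1 - rᵏ⁺¹)` these entries are `1 - rᵏ`.
Hence `F₀⁽¹⁾` cancels against `F₁⁽¹⁾(F₁⁽¹⁾)*` and `T⁽¹⁾ = 1`, whereas
`1 - F₀⁽²⁾ + F₁⁽²⁾(F₁⁽²⁾)*` has the entries `1 - qᵏ`. So `T⁽²⁾ - T⁽¹⁾` has the entries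
`-(1 - q)qᵏ`, a geometric series with sum `-1`.
-/

section Diagonal

variable {ι 𝕜 E : Type*}

/-- The operator `A` is diagonal with respect to the family `v`, with diagonal entries `d`. The
family is arbitrary, so `A` is determined by `d` only where the span of `v` is dense. -/
def IsDiagonalOn [NormedField 𝕜] [SeminormedAddCommGroup E] [NormedSpace 𝕜 E]
    (v : ι → E) (d : ι → 𝕜) (A : E →L[𝕜] E) : Prop :=
  ∀ i, A (v i) = d i • v i

namespace IsDiagonalOn

section NormedSpace

variable [NormedField 𝕜] [SeminormedAddCommGroup E] [NormedSpace 𝕜 E]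
  {v : ι → E} {d d' : ι → 𝕜} {A B : E →L[𝕜] E}

theorem one : IsDiagonalOn v 1 (1 : E →L[𝕜] E) := fun i => (one_smul 𝕜 (v i)).symm

theorem add (hA : IsDiagonalOn v d A) (hB : IsDiagonalOn v d' B) :
    IsDiagonalOn v (d + d') (A + B) := fun i => by
  rw [add_apply, hA i, hB i, Pi.add_apply, add_smul]

theorem sub (hA : IsDiagonalOn v d A) (hB : IsDiagonalOn v d' B) :
    IsDiagonalOn v (d - d') (A - B) := fun i => by
  rw [sub_apply, hA i, hB i, Pi.sub_apply, sub_smul]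

theorem const_smul (hA : IsDiagonalOn v d A) (c : 𝕜) : IsDiagonalOn v (c • d) (c • A) := fun i => by
  rw [smul_apply, hA i, Pi.smul_apply, smul_assoc]

end NormedSpace

theorem inner_apply_self [RCLike 𝕜] [SeminormedAddCommGroup E] [InnerProductSpace 𝕜 E]
    {v : ι → E} {d : ι → 𝕜} {A : E →L[𝕜] E} (hA : IsDiagonalOn v d A) (hv : Orthonormal 𝕜 v)
    (i : ι) : ⟪v i, A (v i)⟫_𝕜 = d i := by
  rw [hA i, inner_smul_right, inner_self_eq_norm_sq_to_K, hv.norm_eq_one, RCLike.ofReal_one,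
    one_pow, mul_one]

end IsDiagonalOn

end Diagonal

section WeightedShift

variable {𝕜 H : Type*} [RCLike 𝕜] [NormedAddCommGroup H] [InnerProductSpace 𝕜 H]

/-- The operator `F` is the unilateral weighted shift with weights `w` along the Hilbert
basis `b`. -/
def IsWeightedShift (b : HilbertBasis ℕ 𝕜 H) (w : ℕ → 𝕜) (F : H →L[𝕜] H) : Prop :=
  ∀ k, F (b k) = w k • b (k + 1)

variable [CompleteSpace H] {b : HilbertBasis ℕ 𝕜 H} {F : H →L[𝕜] H}

namespace IsWeightedShift

variable {w : ℕ → 𝕜}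

theorem inner_adjoint_apply (hF : IsWeightedShift b w F) (j k : ℕ) :
    ⟪b j, adjoint F (b k)⟫_𝕜 = starRingEnd 𝕜 (w j) * if j + 1 = k then 1 else 0 := by
  rw [adjoint_inner_right, hF j, inner_smul_left, orthonormal_iff_ite.mp b.orthonormal]

theorem adjoint_apply_zero (hF : IsWeightedShift b w F) : adjoint F (b 0) = 0 := by
  refine b.repr.injective (lp.ext (funext fun j => ?_))
  simp [b.repr_apply_apply, hF.inner_adjoint_apply]

theorem adjoint_apply_succ (hF : IsWeightedShift b w F) (k : ℕ) :
    adjoint F (b (k + 1)) = starRingEnd 𝕜 (w k) • b k := by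
  refine b.repr.injective (lp.ext (funext fun j => ?_))
  rw [b.repr_apply_apply, b.repr_apply_apply, hF.inner_adjoint_apply, inner_smul_right,
    orthonormal_iff_ite.mp b.orthonormal]
  by_cases hjk : j = k <;> simp [hjk]

theorem isDiagonalOn_mul_adjoint (hF : IsWeightedShift b w F) {d : ℕ → 𝕜} (hd_zero : d 0 = 0)
    (hd_succ : ∀ k, d (k + 1) = (‖w k‖ : 𝕜) ^ 2) : IsDiagonalOn b d (F * adjoint F)
  | 0 => by
    rw [mul_apply_eq_comp, hF.adjoint_apply_zero, map_zero, hd_zero, zero_smul]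
  | k + 1 => by
    rw [mul_apply_eq_comp, hF.adjoint_apply_succ, map_smul, hF k, smul_smul, RCLike.conj_mul,
      hd_succ]

theorem isDiagonalOn_mul_adjoint_of_sqrt {r : ℝ}
    (hF : IsWeightedShift b (fun k => ((√(1 - r ^ (k + 1)) : ℝ) : 𝕜)) F) (hr : |r| ≤ 1) :
    IsDiagonalOn b (fun k => ((1 - r ^ k : ℝ) : 𝕜)) (F * adjoint F) := by
  refine hF.isDiagonalOn_mul_adjoint (by simp) fun k => ?_
  have hpow : r ^ (k + 1) ≤ 1 :=
    (le_abs_self _).trans (abs_pow r (k + 1) ▸ pow_le_one₀ (abs_nonneg r) hr)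
  rw [RCLike.norm_ofReal, abs_of_nonneg (Real.sqrt_nonneg _), ← RCLike.ofReal_pow,
    Real.sq_sqrt (sub_nonneg.mpr hpow)]

end IsWeightedShift

end WeightedShift

section IdempotentTrace

variable {𝕜 H : Type*} [RCLike 𝕜] [NormedAddCommGroup H] [InnerProductSpace 𝕜 H] [CompleteSpace H]

/-- The image of the `M₂`-trace of the idempotent `E₋₁` under the representation of `O(S²_pq)`
that sends the generators `f₀`, `f₁` to `F₀`, `F₁`. -/
noncomputable def idempotentTrace (q : ℝ) (F₀ F₁ : H →L[𝕜] H) : H →L[𝕜] H :=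
  (q : 𝕜) • 1 + ((1 - q : ℝ) : 𝕜) • (1 - F₀ + F₁ * adjoint F₁)

theorem IsDiagonalOn.idempotentTrace {ι : Type*} {v : ι → H} {d₀ d₁ : ι → 𝕜} {F₀ F₁ : H →L[𝕜] H}
    (h₀ : IsDiagonalOn v d₀ F₀) (h₁ : IsDiagonalOn v d₁ (F₁ * adjoint F₁)) (q : ℝ) :
    IsDiagonalOn v ((q : 𝕜) • 1 + ((1 - q : ℝ) : 𝕜) • (1 - d₀ + d₁)) (idempotentTrace q F₀ F₁) :=
  (one.const_smul _).add (((one.sub h₀).add h₁).const_smul _)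

variable {b : HilbertBasis ℕ 𝕜 H} {p q : ℝ} {F01 F11 F02 F12 : H →L[𝕜] H}

theorem isDiagonalOn_idempotentTrace_sub (hp : |p| ≤ 1) (hq : |q| ≤ 1)
    (h01 : IsDiagonalOn b (fun k => ((1 - p ^ k : ℝ) : 𝕜)) F01)
    (h11 : IsWeightedShift b (fun k => ((√(1 - p ^ (k + 1)) : ℝ) : 𝕜)) F11)
    (h02 : IsDiagonalOn b 1 F02)
    (h12 : IsWeightedShift b (fun k => ((√(1 - q ^ (k + 1)) : ℝ) : 𝕜)) F12) :
    IsDiagonalOn b (fun k => -(1 - (q : 𝕜)) * (q : 𝕜) ^ k)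
      (idempotentTrace q F02 F12 - idempotentTrace q F01 F11) := by
  have hT₁ := h01.idempotentTrace (h11.isDiagonalOn_mul_adjoint_of_sqrt hp) q
  have hT₂ := h02.idempotentTrace (h12.isDiagonalOn_mul_adjoint_of_sqrt hq) q
  convert hT₂.sub hT₁ using 1
  funext k
  simp only [Pi.sub_apply, Pi.add_apply, Pi.smul_apply, Pi.one_apply, smul_eq_mul]
  push_cast
  ring

theorem stmt13_general (hp : |p| ≤ 1) (hq : |q| < 1)
    (h01 : ∀ k, F01 (b k) = ((1 - p ^ k : ℝ) : 𝕜) • b k)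
    (h11 : ∀ k, F11 (b k) = ((√(1 - p ^ (k + 1)) : ℝ) : 𝕜) • b (k + 1))
    (h02 : ∀ k, F02 (b k) = b k)
    (h12 : ∀ k, F12 (b k) = ((√(1 - q ^ (k + 1)) : ℝ) : 𝕜) • b (k + 1)) :
    let D := idempotentTrace q F02 F12 - idempotentTrace q F01 F11
    (∀ k, D (b k) = ⟪b k, D (b k)⟫_𝕜 • b k) ∧
      Summable (fun k => ‖⟪b k, D (b k)⟫_𝕜‖) ∧ ∑' k, ⟪b k, D (b k)⟫_𝕜 = -1 := by
  intro D
  have hD : IsDiagonalOn b (fun k => -(1 - (q : 𝕜)) * (q : 𝕜) ^ k) D :=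
    isDiagonalOn_idempotentTrace_sub hp hq.le h01 h11
      (fun k => (h02 k).trans (one_smul 𝕜 (b k)).symm) h12
  have hq_norm : ‖(q : 𝕜)‖ < 1 := by rwa [RCLike.norm_ofReal]
  have hq_ne : 1 - (q : 𝕜) ≠ 0 :=
    sub_ne_zero.mpr (by exact_mod_cast (abs_lt.mp hq).2.ne')
  simp only [hD.inner_apply_self b.orthonormal]
  refine ⟨hD, ((summable_geometric_of_norm_lt_one hq_norm).mul_left _).norm, ?_⟩
  rw [tsum_mul_left, tsum_geometric_of_norm_lt_one hq_norm, neg_mul, mul_inv_cancel₀ hq_ne]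

end IdempotentTrace

/-- The vectors `stdBasis k` as a Hilbert basis of `ℓ²(ℕ)`. -/
noncomputable def stdHilbertBasis : HilbertBasis ℕ ℂ (lp (fun _ : ℕ => ℂ) 2) :=
  HilbertBasis.ofRepr (LinearIsometryEquiv.refl ℂ _)

theorem coe_stdHilbertBasis : ⇑stdHilbertBasis = stdBasis := by
  funext k
  rw [← stdHilbertBasis.repr_symm_single]
  rfl

/-- for the operators `T⁽ⁱ⁾ = q·I + (1−q)(I − F₀⁽ⁱ⁾ + F₁⁽ⁱ⁾(F₁⁽ⁱ⁾)*)` built from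
the two infinite-dimensional irreducible representations of `O(S²_pq)`, the difference
`T⁽²⁾ − T⁽¹⁾` is diagonal in the standard basis, trace class (absolutely summable diagonal),
and its trace equals `−1`. -/
theorem stmt13 (p q : ℝ) (hp0 : 0 < p) (hp1 : p < 1) (hq0 : 0 < q) (hq1 : q < 1)
    (F01 F11 F02 F12 : lp (fun _ : ℕ => ℂ) 2 →L[ℂ] lp (fun _ : ℕ => ℂ) 2)
    (h01 : ∀ k : ℕ, F01 (stdBasis k) = ((1 - p ^ k : ℝ) : ℂ) • stdBasis k)
    (h11 : ∀ k : ℕ, F11 (stdBasis k) = ((Real.sqrt (1 - p ^ (k + 1)) : ℝ) : ℂ) • stdBasis (k + 1))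
    (h02 : ∀ k : ℕ, F02 (stdBasis k) = stdBasis k)
    (h12 : ∀ k : ℕ, F12 (stdBasis k) = ((Real.sqrt (1 - q ^ (k + 1)) : ℝ) : ℂ) • stdBasis (k + 1)) :
    (∀ k : ℕ,
      (((q : ℂ) • 1 + ((1 - q : ℝ) : ℂ) • (1 - F02 + F12 * adjoint F12)) -
        ((q : ℂ) • 1 + ((1 - q : ℝ) : ℂ) • (1 - F01 + F11 * adjoint F11))) (stdBasis k) =
      ⟪stdBasis k,
        (((q : ℂ) • 1 + ((1 - q : ℝ) : ℂ) • (1 - F02 + F12 * adjoint F12)) -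
          ((q : ℂ) • 1 + ((1 - q : ℝ) : ℂ) • (1 - F01 + F11 * adjoint F11))) (stdBasis k)⟫_ℂ •
        stdBasis k) ∧
    Summable (fun k : ℕ =>
      ‖⟪stdBasis k,
        (((q : ℂ) • 1 + ((1 - q : ℝ) : ℂ) • (1 - F02 + F12 * adjoint F12)) -
          ((q : ℂ) • 1 + ((1 - q : ℝ) : ℂ) • (1 - F01 + F11 * adjoint F11))) (stdBasis k)⟫_ℂ‖) ∧
    ∑' k : ℕ,
      ⟪stdBasis k,
        (((q : ℂ) • 1 + ((1 - q : ℝ) : ℂ) • (1 - F02 + F12 * adjoint F12)) -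
          ((q : ℂ) • 1 + ((1 - q : ℝ) : ℂ) • (1 - F01 + F11 * adjoint F11))) (stdBasis k)⟫_ℂ
      = -1 := by
  rw [← coe_stdHilbertBasis] at h01 h11 h02 h12 ⊢
  exact stmt13_general ((abs_of_pos hp0).trans_le hp1.le) ((abs_of_pos hq0).trans_lt hq1)
    h01 h11 h02 h12
end

section
/- The H-extension B = O(S²_pq) ⊆ O(S³_pq) is not cleft: there exists no ℂ-linear map Φ : H → O(S³_pq) that is both right H-colinear (Δ_R ∘ Φ = (Φ ⊗ id_H) ∘ Δ) and convolution invertible (i.e. admits a ℂ-linear Ψ : H → O(S³_pq) with Φ(h₍₁₎)Ψ(h₍₂₎) = ε(h)·1 = Ψ(h₍₁₎)Φ(h₍₂₎) for all h ∈ H, in Sweedler notation). Equivalently, since the elements uⁿ (n ∈ ℤ) are group-like and span H, there is no family (φ_n)_{n∈ℤ} of invertible elements of O(S³_pq) with Δ_R(φ_n) = φ_n ⊗ uⁿ for all n; in particular there is no invertible element φ ∈ O(S³_pq) with Δ_R(φ) = φ ⊗ u. -/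
noncomputable section

open scoped TensorProduct

namespace S3pq

variable (p q : ℝ)

/-- The Hopf algebra `H = O(U(1))` of Laurent polynomials `ℂ[u,u⁻¹]`, with `u = T 1`
group-like. -/
abbrev Hopf := LaurentPolynomial ℂ

/- The homomorphism `a ↦ x`, `b ↦ l` from `O(S³_pq)` to the quantum disc sends every
right-invertible element to a scalar: the disc embeds in skew Laurent polynomials `k[z][x, x⁻¹]`,
whose right-invertible elements are monomials `r xⁿ`, and since the disc preserves the subspace
`k[x]` of `k[x, x⁻¹]`, neither `xⁿ` nor its inverse can have a negative exponent. Hence the value of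
a character of `O(S³_pq)` at a right-invertible `φ` depends only on its value at `b`, and by
symmetry only on its value at `a`; so all characters take the same, nonzero, value at `φ`. But if
`Δ_R φ = φ ⊗ uⁿ`, translating a character by `2 ∈ ℂˣ` multiplies its value at `φ` by `2ⁿ`. -/

open Multiplicative

lemma smul_mem_of_mem_adjoin {R A M : Type*} [CommSemiring R] [Semiring A] [Algebra R A]
    [AddCommMonoid M] [Module R M] [Module A M] [IsScalarTower R A M] {s : Set A}
    {N : Submodule R M} (h : ∀ a ∈ s, ∀ m ∈ N, a • m ∈ N) {a : A} (ha : a ∈ Algebra.adjoin R s)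
    {m : M} (hm : m ∈ N) : a • m ∈ N := by
  induction ha using Algebra.adjoin_induction generalizing m with
  | mem a ha => exact h a ha m hm
  | algebraMap r => exact (algebraMap_smul A r m).symm ▸ N.smul_mem r hm
  | add a b _ _ iha ihb => exact add_smul a b m ▸ N.add_mem (iha hm) (ihb hm)
  | mul a b _ _ iha ihb => exact mul_smul a b m ▸ iha (ihb hm)

section SkewMonoidAlgebra

open SkewMonoidAlgebra

lemma eq_single_of_card_support_eq_one {R G : Type*} [AddCommMonoid R]
    {f : SkewMonoidAlgebra R G} (h : f.support.card = 1) : ∃ u r, f = single u r := by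
  obtain ⟨u, r, -, h⟩ := Finsupp.card_support_eq_one'.1 h
  exact ⟨u, r, coeff_injective h⟩

variable {R G : Type*} [CommRing R] [Group G] [MulSemiringAction G R]

lemma coeff_mul_of_uniqueMul {f g : SkewMonoidAlgebra R G} {u v : G}
    (h : UniqueMul f.support g.support u v) :
    (f * g).coeff (u * v) = f.coeff u * u • g.coeff v := by
  classical
  rw [coeff_mul_left, sum_def', Finset.sum_eq_single u, inv_mul_cancel_left]
  · intro w hw hwu
    suffices g.coeff (w⁻¹ * (u * v)) = 0 by rw [this, smul_zero, mul_zero]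
    by_contra hg
    exact hwu (h hw (mem_support_iff.2 hg) (mul_inv_cancel_left w _)).1
  · intro hu
    rw [notMem_support_iff.1 hu, zero_mul]

variable [IsDomain R] [TwoUniqueProds G]

/- Two distinct uniquely represented products would be two distinct elements in the support of
`f * g`. -/
lemma card_support_eq_one_of_mul_eq_one {f g : SkewMonoidAlgebra R G} (h : f * g = 1) :
    f.support.card = 1 ∧ g.support.card = 1 := by
  have hfg : f.support.card * g.support.card ≠ 0 := by
    simp only [ne_eq, mul_eq_zero, Finset.card_eq_zero, support_eq_empty, not_or]
    exact ⟨left_ne_zero_of_mul_eq_one h, right_ne_zero_of_mul_eq_one h⟩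
  rw [← mul_eq_one]
  by_contra hne
  obtain ⟨⟨u, v⟩, huv, ⟨u', v'⟩, huv', hdist, huniq, huniq'⟩ :=
    TwoUniqueProds.uniqueMul_of_one_lt_card (by omega : 1 < f.support.card * g.support.card)
  have mul_eq_one_of_uniqueMul {u v : G} (huv : (u, v) ∈ f.support ×ˢ g.support)
      (huniq : UniqueMul f.support g.support u v) : u * v = 1 := by
    rw [Finset.mem_product, mem_support_iff, mem_support_iff] at huv
    by_contra hne
    apply mul_ne_zero huv.1 ((smul_ne_zero_iff_ne u).2 huv.2)
    rw [← coeff_mul_of_uniqueMul huniq, h, coeff_one, Finsupp.single_eq_of_ne hne]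
  obtain ⟨hu, hv⟩ := Finset.mem_product.1 huv'
  obtain ⟨rfl, rfl⟩ := huniq hu hv
    ((mul_eq_one_of_uniqueMul huv' huniq').trans (mul_eq_one_of_uniqueMul huv huniq).symm)
  exact hdist rfl

theorem exists_eq_single_of_mul_eq_one {f g : SkewMonoidAlgebra R G} (h : f * g = 1) :
    ∃ u r s, IsUnit r ∧ IsUnit s ∧ f = single u r ∧ g = single u⁻¹ s := by
  obtain ⟨hf, hg⟩ := card_support_eq_one_of_mul_eq_one h
  obtain ⟨u, r, rfl⟩ := eq_single_of_card_support_eq_one hf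
  obtain ⟨v, s, rfl⟩ := eq_single_of_card_support_eq_one hg
  rw [single_mul_single, one_def] at h
  obtain ⟨huv, hrs⟩ | ⟨-, h0⟩ := Finsupp.single_eq_single_iff _ _ _ _ |>.1 (congrArg coeff h)
  · refine ⟨u, r, s, .of_mul_eq_one _ hrs, ?_, rfl, by rw [eq_inv_of_mul_eq_one_right huv]⟩
    simpa using (IsUnit.of_mul_eq_one_right _ hrs).map (MulSemiringAction.toRingHom G R u⁻¹)
  · exact absurd h0 one_ne_zero

end SkewMonoidAlgebra

section QuantumDisc

variable {k : Type*} [Field k] (t : kˣ)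

/-- The polynomial ring `k[z]` on which `n : ℤ` acts by `z ↦ t⁻ⁿ z`. A type synonym, so that the
action can depend on `t`. -/
def ScaledPolynomial (_t : kˣ) : Type _ := Polynomial k
  deriving CommRing, Algebra k

namespace ScaledPolynomial

instance : IsDomain (ScaledPolynomial t) := inferInstanceAs (IsDomain (Polynomial k))

/-- The variable of the polynomial ring `ScaledPolynomial t`. -/
def z : ScaledPolynomial t := (Polynomial.X : Polynomial k)

variable {t}

/-- Substitution of an element of a `k`-algebra for the variable `z`. -/
def aeval {A : Type*} [Semiring A] [Algebra k A] (c : A) : ScaledPolynomial t →ₐ[k] A :=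
  Polynomial.aeval (R := k) c

@[simp] lemma aeval_z {A : Type*} [Semiring A] [Algebra k A] (c : A) : aeval c (z t) = c :=
  Polynomial.aeval_X (R := k) c

lemma algHom_ext {A : Type*} [Semiring A] [Algebra k A] {f g : ScaledPolynomial t →ₐ[k] A}
    (h : f (z t) = g (z t)) : f = g :=
  Polynomial.algHom_ext (R := k) h

lemma exists_eq_algebraMap_of_isUnit {r : ScaledPolynomial t} (hr : IsUnit r) :
    ∃ c : k, r = algebraMap k _ c :=
  (Polynomial.isUnit_iff.1 hr).imp fun _ h ↦ h.2.symm

variable (t) in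
/-- The substitution `z ↦ t⁻ⁿ z`. -/
def scale (n : Multiplicative ℤ) : ScaledPolynomial t →ₐ[k] ScaledPolynomial t :=
  aeval ((t : k) ^ (-n.toAdd) • z t)

instance : MulSemiringAction (Multiplicative ℤ) (ScaledPolynomial t) where
  smul n f := scale t n f
  one_smul f := by
    suffices scale t 1 = .id k _ from DFunLike.congr_fun this f
    exact algHom_ext (by simp [scale])
  mul_smul m n f := by
    suffices scale t (m * n) = (scale t m).comp (scale t n) from DFunLike.congr_fun this f
    exact algHom_ext (by simp [scale, zpow_add₀, smul_smul])
  smul_zero _ := map_zero _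
  smul_add _ := map_add _
  smul_one _ := map_one _
  smul_mul _ := map_mul _

instance : SMulCommClass (Multiplicative ℤ) k (ScaledPolynomial t) where
  smul_comm n := map_smul (scale t n)

@[simp] lemma smul_z (n : Multiplicative ℤ) : n • z t = (t : k) ^ (-n.toAdd) • z t :=
  aeval_z _

lemma aeval_smul (c : k) (n : Multiplicative ℤ) (f : ScaledPolynomial t) :
    aeval c (n • f) = aeval ((t : k) ^ (-n.toAdd) * c) f := by
  suffices (aeval c).comp (scale t n) = aeval ((t : k) ^ (-n.toAdd) * c) from
    DFunLike.congr_fun this f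
  exact algHom_ext (by simp [scale])

end ScaledPolynomial

/-- The skew Laurent polynomial ring `k[z][x, x⁻¹]` in which `z * x = t • (x * z)`. -/
abbrev SkewLaurent : Type _ := SkewMonoidAlgebra (ScaledPolynomial t) (Multiplicative ℤ)

namespace SkewLaurent

open SkewMonoidAlgebra ScaledPolynomial

/-- The generator `x` of the quantum disc. -/
def x : SkewLaurent t := single (ofAdd 1) 1

/-- The second generator `y = x⁻¹ (1 - z)` of the quantum disc. -/
def y : SkewLaurent t := single (ofAdd (-1)) (1 - (t : k) • z t)

lemma x_mul_y : x t * y t = single 1 (1 - z t) := by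
  simp [x, y, single_mul_single, smul_sub, smul_comm _ (t : k), smul_smul]

lemma y_mul_x : y t * x t = (t : k) • (x t * y t) + (1 - (t : k)) • 1 := by
  rw [x_mul_y, x, y, single_mul_single, ← ofAdd_add, one_def, smul_single, smul_single,
    ← single_add]
  simp [smul_sub, sub_smul]

/-- The coordinate algebra of the quantum disc, realised inside the skew Laurent polynomials. -/
def disc : Subalgebra k (SkewLaurent t) := Algebra.adjoin k {x t, y t}

lemma x_mem_disc : x t ∈ disc t := Algebra.subset_adjoin (.inl rfl)

lemma y_mem_disc : y t ∈ disc t := Algebra.subset_adjoin (.inr rfl)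

/-- Let `x` and `z` act on `k[x, x⁻¹]` by multiplication and by `z xⁿ = tⁿ xⁿ`. The elements of this
submodule are the `f` with `f • 1 ∈ k[x]`. -/
def fock : Submodule k (SkewLaurent t) where
  carrier := {f | ∀ n < 0, aeval ((t : k) ^ n) (f.coeff (ofAdd n)) = 0}
  zero_mem' n _ := by simp
  add_mem' hf hg n hn := by simp [hf n hn, hg n hn]
  smul_mem' c f hf n hn := by simp [hf n hn]

variable {t}

lemma one_mem_fock : 1 ∈ fock t := fun n hn ↦ by
  rw [coeff_one, Finsupp.single_eq_of_ne (ofAdd_eq_one.not.2 hn.ne), map_zero]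

lemma x_mul_mem_fock {f : SkewLaurent t} (hf : f ∈ fock t) : x t * f ∈ fock t := fun n hn ↦ by
  simpa [x, aeval_smul, zpow_add₀, ← ofAdd_neg, ← ofAdd_add] using hf (-1 + n) (by omega)

lemma y_mul_mem_fock {f : SkewLaurent t} (hf : f ∈ fock t) : y t * f ∈ fock t := fun n hn ↦ by
  obtain rfl | hn' : n = -1 ∨ 1 + n < 0 := by omega
  · simp [y]
  · simpa [y, aeval_smul, ← zpow_one_add₀, ← ofAdd_add] using .inr (hf (1 + n) hn')

lemma disc_le_fock : (disc t).toSubmodule ≤ fock t := fun f hf ↦ by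
  rw [← mul_one f]
  refine smul_mem_of_mem_adjoin ?_ hf one_mem_fock
  rintro _ (rfl | rfl) g hg
  exacts [x_mul_mem_fock hg, y_mul_mem_fock hg]

lemma nonneg_of_single_mem_disc {n : ℤ} {r : ScaledPolynomial t} (hr : IsUnit r)
    (h : single (ofAdd n) r ∈ disc t) : 0 ≤ n := by
  by_contra! hn
  apply (hr.map (aeval ((t : k) ^ n))).ne_zero
  simpa using disc_le_fock h n hn

theorem disc.exists_eq_algebraMap_of_mul_eq_one {f g : disc t} (h : f * g = 1) :
    ∃ c : k, f = algebraMap k (disc t) c := by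
  obtain ⟨u, r, s, hr, hs, hf, hg⟩ := exists_eq_single_of_mul_eq_one (congrArg Subtype.val h)
  obtain ⟨c, rfl⟩ := exists_eq_algebraMap_of_isUnit hr
  have hu : u.toAdd = 0 := le_antisymm
    (neg_nonneg.1 (nonneg_of_single_mem_disc hs (hg ▸ g.2)))
    (nonneg_of_single_mem_disc hr (hf ▸ f.2))
  exact ⟨c, Subtype.ext (by rw [hf, toAdd_eq_zero.1 hu]; rfl)⟩

/-- The character `x ↦ μ`, `z ↦ 0`. -/
def character (μ : kˣ) : SkewLaurent t →ₐ[k] k :=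
  liftNCAlgHom (aeval 0) ((Units.coeHom k).comp (zpowersHom kˣ μ)) fun {f n} ↦ by
    rw [aeval_smul, mul_zero, mul_comm]

lemma character_x (μ : kˣ) : character μ (x t) = μ := by
  simp [character, x, liftNCAlgHom, liftNCRingHom]

end SkewLaurent

end QuantumDisc

section Sphere

/-- Elements `x, x', y, y'` of a `k`-algebra satisfying the relations of the generators
`a, a*, b, b*` of `O(S³_pq)`. -/
structure SphereRelations {k A : Type*} [CommRing k] [Ring A] [Algebra k A] (p q : k)
    (x x' y y' : A) : Prop where
  left : x' * x = q • (x * x') + (1 - q) • 1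
  right : y' * y = p • (y * y') + (1 - p) • 1
  comm : Commute x y
  comm_star : Commute x y'
  star_comm : Commute x' y
  star_comm_star : Commute x' y'
  key : (1 - x * x') * (1 - y * y') = 0

namespace SphereRelations

section CommRing

variable {k A B : Type*} [CommRing k] [Ring A] [Algebra k A] [Ring B] [Algebra k B] {p q : k}
  {x x' y y' : A}

lemma map (h : SphereRelations p q x x' y y') (f : A →ₐ[k] B) :
    SphereRelations p q (f x) (f x') (f y) (f y') where
  left := by simpa using congrArg f h.left
  right := by simpa using congrArg f h.right
  comm := h.comm.map f
  comm_star := h.comm_star.map f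
  star_comm := h.star_comm.map f
  star_comm_star := h.star_comm_star.map f
  key := by simpa using congrArg f h.key

lemma swap (h : SphereRelations p q x x' y y') : SphereRelations q p y y' x x' where
  left := h.right
  right := h.left
  comm := h.comm.symm
  comm_star := h.star_comm.symm
  star_comm := h.comm_star.symm
  star_comm_star := h.star_comm_star.symm
  key := by
    have hxy : Commute (x * x') (y * y') :=
      (h.comm.mul_right h.comm_star).mul_left (h.star_comm.mul_right h.star_comm_star)
    have hxy' : Commute (1 - x * x') (1 - y * y') :=
      (Commute.one_left _).sub_left ((Commute.one_right _).sub_right hxy)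
    rw [← hxy'.eq, h.key]

lemma of_unit (h : x' * x = q • (x * x') + (1 - q) • 1) (l : kˣ) :
    SphereRelations p q x x' (algebraMap k A l) (algebraMap k A ↑l⁻¹) where
  left := h
  right := by simp [← map_mul, ← add_smul]
  comm := Algebra.commute_algebraMap_right _ _
  comm_star := Algebra.commute_algebraMap_right _ _
  star_comm := Algebra.commute_algebraMap_right _ _
  star_comm_star := Algebra.commute_algebraMap_right _ _
  key := by simp [← map_mul]

end CommRing

lemma star_mul_self {k A : Type*} [Field k] [CommRing A] [Algebra k A] {p q : k} {x x' y y' : A}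
    (h : SphereRelations p q x x' y y') (hq : q ≠ 1) : x' * x = 1 := by
  apply smul_right_injective A (sub_ne_zero.2 hq.symm)
  calc (1 - q) • (x' * x) = x' * x - q • (x * x') := by rw [sub_smul, one_smul, mul_comm x]
    _ = (1 - q) • 1 := sub_eq_of_eq_add' h.left

lemma generators : SphereRelations (p : ℂ) (q : ℂ) (a p q) (a' p q) (b p q) (b' p q) where
  left := by
    simpa [-Complex.coe_smul, a, a'] using RingQuot.mkAlgHom_rel ℂ (Rel.ra (p := p) (q := q))
  right := by
    simpa [-Complex.coe_smul, b, b'] using RingQuot.mkAlgHom_rel ℂ (Rel.rb (p := p) (q := q))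
  comm := by simpa using! RingQuot.mkAlgHom_rel ℂ (Rel.rab (p := p) (q := q))
  comm_star := by simpa using! RingQuot.mkAlgHom_rel ℂ (Rel.rab' (p := p) (q := q))
  star_comm := by simpa using! RingQuot.mkAlgHom_rel ℂ (Rel.ra'b (p := p) (q := q))
  star_comm_star := by simpa using! RingQuot.mkAlgHom_rel ℂ (Rel.ra'b' (p := p) (q := q))
  key := by simpa using! RingQuot.mkAlgHom_rel ℂ (Rel.rkey (p := p) (q := q))

variable {p q} {A : Type*} [Ring A] [Algebra ℂ A] {x x' y y' : A}

/-- The algebra homomorphism out of `O(S³_pq)` given by its universal property. -/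
def lift (h : SphereRelations (p : ℂ) (q : ℂ) x x' y y') : O p q →ₐ[ℂ] A :=
  RingQuot.liftAlgHom ℂ ⟨FreeAlgebra.lift ℂ ![x, x', y, y'], by
    rintro _ _ ⟨⟩
    · simpa [-Complex.coe_smul, Ag, Ag'] using h.left
    · simpa [-Complex.coe_smul, Bg, Bg'] using h.right
    · simpa [Ag, Bg] using h.comm.eq
    · simpa [Ag, Bg'] using h.comm_star.eq
    · simpa [Ag', Bg] using h.star_comm.eq
    · simpa [Ag', Bg'] using h.star_comm_star.eq
    · simpa [Ag, Ag', Bg, Bg'] using h.key⟩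

variable (h : SphereRelations (p : ℂ) (q : ℂ) x x' y y')

@[simp] lemma lift_a : h.lift (a p q) = x := by simp [lift, a, Ag]

@[simp] lemma lift_a' : h.lift (a' p q) = x' := by simp [lift, a', Ag']

@[simp] lemma lift_b : h.lift (b p q) = y := by simp [lift, b, Bg]

@[simp] lemma lift_b' : h.lift (b' p q) = y' := by simp [lift, b', Bg']

end SphereRelations

variable {p q}

namespace O

lemma algHom_ext {A : Type*} [Semiring A] [Algebra ℂ A] {f g : O p q →ₐ[ℂ] A}
    (ha : f (a p q) = g (a p q)) (ha' : f (a' p q) = g (a' p q)) (hb : f (b p q) = g (b p q))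
    (hb' : f (b' p q) = g (b' p q)) : f = g := by
  apply RingQuot.ringQuot_ext'
  ext i
  fin_cases i
  exacts [ha, ha', hb, hb']

variable (p q) in
/-- The homomorphism `O(S³_pq) → O(S³_qp)` that exchanges the roles of `a` and `b`. -/
def swap : O p q →ₐ[ℂ] O q p := (SphereRelations.generators q p).swap.lift

lemma swap_swap (φ : O p q) : swap q p (swap p q φ) = φ := by
  suffices (swap q p).comp (swap p q) = .id ℂ _ from DFunLike.congr_fun this φ
  apply algHom_ext <;> simp [swap]

section CommRing

variable {A : Type*} [CommRing A] [Algebra ℂ A]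

lemma map_a'_mul_map_a (f : O p q →ₐ[ℂ] A) (hq : q ≠ 1) : f (a' p q) * f (a p q) = 1 :=
  ((SphereRelations.generators p q).map f).star_mul_self (by exact_mod_cast hq)

lemma map_b'_mul_map_b (f : O p q →ₐ[ℂ] A) (hp : p ≠ 1) : f (b' p q) * f (b p q) = 1 :=
  ((SphereRelations.generators p q).map f).swap.star_mul_self (by exact_mod_cast hp)

lemma algHom_ext_of_comm (hp : p ≠ 1) (hq : q ≠ 1) {f g : O p q →ₐ[ℂ] A}
    (ha : f (a p q) = g (a p q)) (hb : f (b p q) = g (b p q)) : f = g := by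
  refine algHom_ext ha ?_ hb ?_
  · exact left_inv_eq_right_inv (map_a'_mul_map_a f hq)
      (by rw [ha, mul_comm, map_a'_mul_map_a g hq])
  · exact left_inv_eq_right_inv (map_b'_mul_map_b f hp)
      (by rw [hb, mul_comm, map_b'_mul_map_b g hp])

end CommRing

variable {φ ψ : O p q}

lemma exists_character_eq (hp1 : p ≠ 1) (hq0 : q ≠ 0) (hq1 : q ≠ 1) (h : φ * ψ = 1) (l : ℂˣ) :
    ∃ c : ℂ, ∀ χ : O p q →ₐ[ℂ] ℂ, χ (b p q) = l → χ φ = c := by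
  let t : ℂˣ := .mk0 q (by exact_mod_cast hq0)
  let x : SkewLaurent.disc t := ⟨SkewLaurent.x t, SkewLaurent.x_mem_disc t⟩
  let y : SkewLaurent.disc t := ⟨SkewLaurent.y t, SkewLaurent.y_mem_disc t⟩
  have hxy : y * x = (q : ℂ) • (x * y) + (1 - (q : ℂ)) • 1 := Subtype.ext (SkewLaurent.y_mul_x t)
  let τ : O p q →ₐ[ℂ] SkewLaurent.disc t := (SphereRelations.of_unit hxy l).lift
  obtain ⟨c, hc⟩ := SkewLaurent.disc.exists_eq_algebraMap_of_mul_eq_one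
    (by rw [← map_mul, h, map_one] : τ φ * τ ψ = 1)
  refine ⟨c, fun χ hχ ↦ ?_⟩
  let μ : ℂˣ := .mkOfMulEqOne _ _ (by rw [mul_comm, map_a'_mul_map_a χ hq1])
  have hχτ : χ = ((SkewLaurent.character μ).comp (SkewLaurent.disc t).val).comp τ :=
    algHom_ext_of_comm hp1 hq1 (by simp [τ, x, μ, SkewLaurent.character_x])
      (by rw [hχ, AlgHom.comp_apply, SphereRelations.lift_b, AlgHom.commutes]; rfl)
  rw [hχτ, AlgHom.comp_apply, hc, AlgHom.commutes, Algebra.algebraMap_self_apply]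

lemma character_eq_of_map_b_eq (hp1 : p ≠ 1) (hq0 : q ≠ 0) (hq1 : q ≠ 1) (h : φ * ψ = 1)
    {χ χ' : O p q →ₐ[ℂ] ℂ} (hb : χ (b p q) = χ' (b p q)) : χ φ = χ' φ := by
  obtain ⟨l, hl⟩ := IsUnit.of_mul_eq_one_right _ (map_b'_mul_map_b χ hp1)
  obtain ⟨c, hc⟩ := exists_character_eq hp1 hq0 hq1 h l
  rw [hc χ hl.symm, hc χ' (hb ▸ hl.symm)]

lemma character_eq_of_map_a_eq (hp0 : p ≠ 0) (hp1 : p ≠ 1) (hq1 : q ≠ 1) (h : φ * ψ = 1)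
    {χ χ' : O p q →ₐ[ℂ] ℂ} (ha : χ (a p q) = χ' (a p q)) : χ φ = χ' φ := by
  have hswap : swap p q φ * swap p q ψ = 1 := by rw [← map_mul, h, map_one]
  simpa only [AlgHom.comp_apply, swap_swap] using
    character_eq_of_map_b_eq (χ := χ.comp (swap q p)) (χ' := χ'.comp (swap q p)) hq1 hp0 hp1 hswap
      (by simpa [swap] using ha)

theorem character_eq (hp0 : p ≠ 0) (hp1 : p ≠ 1) (hq0 : q ≠ 0) (hq1 : q ≠ 1) (h : φ * ψ = 1)
    (χ χ' : O p q →ₐ[ℂ] ℂ) : χ φ = χ' φ := by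
  obtain ⟨l, hl⟩ := IsUnit.of_mul_eq_one_right _ (map_b'_mul_map_b χ hp1)
  let ω : O p q →ₐ[ℂ] ℂ :=
    (SphereRelations.of_unit ((SphereRelations.generators p q).map χ').left l).lift
  calc χ φ = ω φ := character_eq_of_map_b_eq hp1 hq0 hq1 h (by simp [ω, hl])
    _ = χ' φ := character_eq_of_map_a_eq hp0 hp1 hq1 h (by simp [ω])

end O

lemma eq_zero_of_map_eq_tmul_T {k A : Type*} [Field k] [CharZero k] [Ring A] [Algebra k A]
    (δ : A →ₐ[k] A ⊗[k] LaurentPolynomial k) {φ : A} {n : ℤ}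
    (hφ : δ φ = φ ⊗ₜ LaurentPolynomial.T n) {χ : A →ₐ[k] k} (hχφ : χ φ ≠ 0)
    (hχ : ∀ χ' : A →ₐ[k] k, χ' φ = χ φ) : n = 0 := by
  let ev₂ : LaurentPolynomial k →ₐ[k] k :=
    { LaurentPolynomial.eval₂ (.id k) (.mk0 2 two_ne_zero) with
      commutes' := LaurentPolynomial.eval₂_C _ _ }
  have hev₂ : ev₂ (LaurentPolynomial.T n) = 2 ^ n :=
    (LaurentPolynomial.eval₂_T _ _ n).trans (Units.val_zpow_eq_zpow_val _ _)
  have hmul : χ φ * 2 ^ n = χ φ :=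
    calc χ φ * 2 ^ n = (Algebra.TensorProduct.lift χ ev₂ fun _ _ ↦ .all _ _).comp δ φ := by
          rw [AlgHom.comp_apply, hφ, Algebra.TensorProduct.lift_tmul, hev₂]
      _ = χ φ := hχ _
  have h2 : (2 : ℚ) ^ n = 1 := Rat.cast_injective (α := k) (by
    simpa using (mul_eq_left₀ hχφ).1 hmul)
  exact (zpow_eq_one_iff_right₀ zero_le_two one_lt_two.ne').1 h2

theorem stmt16_general (hp0 : p ≠ 0) (hp1 : p ≠ 1) (hq0 : q ≠ 0) (hq1 : q ≠ 1)
    (δ : O p q →ₐ[ℂ] O p q ⊗[ℂ] Hopf) {φ ψ : O p q} (h : φ * ψ = 1) {n : ℤ}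
    (hφ : δ φ = φ ⊗ₜ LaurentPolynomial.T n) : n = 0 := by
  let χ : O p q →ₐ[ℂ] ℂ := (SphereRelations.of_unit (x := 1) (x' := 1) (by simp) 1).lift
  have hχφ : χ φ ≠ 0 := left_ne_zero_of_mul_eq_one (by rw [← map_mul, h, map_one])
  exact eq_zero_of_map_eq_tmul_T δ hφ hχφ (O.character_eq hp0 hp1 hq0 hq1 h · χ)

end Sphere

/-- the `H`-extension `O(S²_pq) ⊆ O(S³_pq)` is not cleft: there is no right
`H`-colinear convolution-invertible linear map `Φ : H → O(S³_pq)` (equivalently, since the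
group-likes `uⁿ` form a basis of `H`, no family `(φₙ)` of invertible elements with
`Δ_R(φₙ) = φₙ ⊗ uⁿ`); in particular there is no invertible `φ` with `Δ_R(φ) = φ ⊗ u`. -/
theorem stmt16 (hp0 : 0 < p) (hp1 : p < 1) (hq0 : 0 < q) (hq1 : q < 1)
    (ΔR : O p q →ₐ[ℂ] O p q ⊗[ℂ] Hopf)
    (hΔa : ΔR (a p q) = a p q ⊗ₜ LaurentPolynomial.T 1)
    (hΔb : ΔR (b p q) = b p q ⊗ₜ LaurentPolynomial.T (-1)) :
    (¬ ∃ Φ Ψ : Hopf →ₗ[ℂ] O p q,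
      (∀ n : ℤ, ΔR (Φ (LaurentPolynomial.T n)) =
        Φ (LaurentPolynomial.T n) ⊗ₜ LaurentPolynomial.T n) ∧
      (∀ n : ℤ, Φ (LaurentPolynomial.T n) * Ψ (LaurentPolynomial.T n) = 1 ∧
        Ψ (LaurentPolynomial.T n) * Φ (LaurentPolynomial.T n) = 1)) ∧
    ¬ ∃ φ : O p q, IsUnit φ ∧ ΔR φ = φ ⊗ₜ LaurentPolynomial.T 1 := by
  have key {φ ψ : O p q} (h : φ * ψ = 1) (hφ : ΔR φ = φ ⊗ₜ LaurentPolynomial.T 1) : False :=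
    one_ne_zero (stmt16_general hp0.ne' hp1.ne hq0.ne' hq1.ne ΔR h hφ)
  exact ⟨fun ⟨_, _, hΦ, hΨ⟩ ↦ key (hΨ 1).1 (hΦ 1), fun ⟨_, ⟨φ, rfl⟩, hφ⟩ ↦ key φ.mul_inv hφ⟩

end S3pq
end
end
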